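/- arXiv:2101.08098 — 4 statements merged into one kernel-verified Lean document; each statement's English description precedes it below -/
import Mathlib

section
/- Let (A,I) be a Jacobson pair and let F1(x), F2(x) ∈ A[x] be monic polynomials. Then F1(x) and F2(x) are left coprime in A[x] if and only if their reductions F̄1(x), F̄2(x) ∈ (A/I)[x] are left coprime in (A/I)[x]. -/
open Polynomial

universe u

/-- A morphism of pairs `(A,I) → (B,J)`: a ring homomorphism `φ : A → B` with
`φ ⁻¹(J) = I`. -/
def IsPairHom {A B : Type*} [Ring A] [Ring B] (I : TwoSidedIdeal A)
    (J : TwoSidedIdeal B) (φ : A →+* B) : Prop :=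
  ∀ a : A, φ a ∈ J ↔ a ∈ I

/-- The commutator filtration of the pair `(A,I)`, indexed from `0`:
`commFilt I 0 = I^(1) = I` and `commFilt I (n+1) = I^(n+2)` is the two-sided ideal
generated by the commutators `[A, I^(n+1)]`. -/
def commFilt {A : Type*} [Ring A] (I : TwoSidedIdeal A) : ℕ → TwoSidedIdeal A
  | 0 => I
  | n + 1 => TwoSidedIdeal.span {x | ∃ a b : A, b ∈ commFilt I n ∧ x = a * b - b * a}

/-- A pair `(A,I)` is perfect if the intersection of its commutator filtration is `{0}`. -/
def IsPerfectPair {A : Type*} [Ring A] (I : TwoSidedIdeal A) : Prop :=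
  ∀ x : A, (∀ n, x ∈ commFilt I n) → x = 0

/-- A pair `(A,I)` is a Jacobson pair if `I` is contained in the Jacobson radical of `A`;
for a two-sided ideal this is equivalent to `1 + a` being a unit for every `a ∈ I`. -/
def IsJacobsonPair {A : Type*} [Ring A] (I : TwoSidedIdeal A) : Prop :=
  ∀ a ∈ I, IsUnit (1 + a)

/-- `f₁, f₂ ∈ A[x]` are left coprime: `A[x]f₁ + A[x]f₂ = A[x]`, equivalently there are
`g₁, g₂` with `g₁f₁ + g₂f₂ = 1`. -/
def LeftCoprime {A : Type*} [Semiring A] (f1 f2 : A[X]) : Prop :=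
  ∃ g1 g2 : A[X], g1 * f1 + g2 * f2 = 1

/-- A pair `(A,I)` is left Henselian: it is a Jacobson pair, and every factorization of
the reduction of a monic polynomial into left coprime monic factors lifts uniquely. -/
def IsLeftHenselianPair {A : Type*} [Ring A] (I : TwoSidedIdeal A) : Prop :=
  IsJacobsonPair I ∧
  ∀ F : A[X], F.Monic →
    ∀ f1 f2 : (I.ringCon.Quotient)[X], f1.Monic → f2.Monic → LeftCoprime f1 f2 →
      F.map (I.ringCon.mk') = f1 * f2 →
      ∃! p : A[X] × A[X], p.1.Monic ∧ p.2.Monic ∧ F = p.1 * p.2 ∧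
        p.1.map I.ringCon.mk' = f1 ∧ p.2.map I.ringCon.mk' = f2

/-- A ring homomorphism is local if it sends every nonunit to a nonunit. -/
def RingHomIsLocal {A B : Type*} [Ring A] [Ring B] (φ : A →+* B) : Prop :=
  ∀ a : A, ¬ IsUnit a → ¬ IsUnit (φ a)

/-- `φ : (A,I) → (H,J)` is a left Henselization of the perfect pair `(A,I)`:
`(H,J)` is a perfect left Henselian pair and every morphism of pairs from `(A,I)` to a
perfect left Henselian pair factors uniquely through `φ`. -/
def IsLeftHenselization {A H : Type u} [Ring A] [Ring H] (I : TwoSidedIdeal A)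
    (J : TwoSidedIdeal H) (φ : A →+* H) : Prop :=
  IsPairHom I J φ ∧ IsPerfectPair J ∧ IsLeftHenselianPair J ∧
  ∀ (B : Type u) (_ : Ring B) (K : TwoSidedIdeal B) (ψ0 : A →+* B),
    IsPairHom I K ψ0 → IsPerfectPair K → IsLeftHenselianPair K →
    ∃! ψ : H →+* B, IsPairHom J K ψ ∧ ψ0 = ψ.comp φ

/-!
Let `L` be the left ideal of `A[X]` generated by the two polynomials. As it contains a monic
polynomial, `A[X] ⧸ L` is a finitely generated left `A`-module. Coprimality of the reductions
means `L + I[X] = A[X]`, that is `I • (A[X] ⧸ L) = A[X] ⧸ L`, so `A[X] ⧸ L = 0` by Nakayama's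
lemma, which holds over noncommutative rings.
-/

theorem eq_top_of_sup_jacobson_smul_top_eq_top {R M : Type*} [Ring R] [AddCommGroup M] [Module R M]
    {N : Submodule R M} [Module.Finite R (M ⧸ N)]
    (h : N ⊔ Ring.jacobson R • (⊤ : Submodule R M) = ⊤) : N = ⊤ := by
  have smul_top : Ring.jacobson R • (⊤ : Submodule R (M ⧸ N)) = ⊤ := by
    rw [← Submodule.map_mkQ_eq_top, Submodule.map_smul'', Submodule.map_top, N.range_mkQ] at h
    exact h
  rw [← Submodule.Quotient.subsingleton_iff, ← Submodule.subsingleton_iff R]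
  exact subsingleton_of_bot_eq_top
    (Module.Finite.fg_top.eq_bot_of_le_jacobson_smul smul_top.ge).symm

theorem IsJacobsonPair.ker_mk'_le_jacobson {A : Type*} [Ring A] {I : TwoSidedIdeal A}
    (hI : IsJacobsonPair I) : RingHom.ker I.ringCon.mk' ≤ Ring.jacobson A := by
  intro a ha
  have haI : a ∈ I := by rwa [← I.ker_ringCon_mk', TwoSidedIdeal.mem_ker]
  rw [← Ideal.jacobson_bot, Ideal.mem_jacobson_iff]
  intro y
  obtain ⟨u, hu⟩ := hI (y * a) (I.mul_mem_left y a haI)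
  refine ⟨↑u⁻¹, (Submodule.mem_bot A).2 ?_⟩
  calc ↑u⁻¹ * y * a + ↑u⁻¹ - 1 = ↑u⁻¹ * (1 + y * a) - 1 := by noncomm_ring
    _ = 0 := by rw [← hu, Units.inv_mul, sub_self]

theorem leftCoprime_iff_span_pair_eq_top {A : Type*} [Semiring A] {f g : A[X]} :
    LeftCoprime f g ↔ Ideal.span {f, g} = ⊤ := by
  rw [Ideal.eq_top_iff_one, Ideal.mem_span_pair]
  rfl

theorem restrictScalars_ker_mapRingHom_le_smul_top {A B : Type*} [Semiring A] [Semiring B]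
    (φ : A →+* B) :
    (RingHom.ker (mapRingHom φ)).restrictScalars A ≤ RingHom.ker φ • ⊤ := by
  intro p hp
  rw [p.as_sum_range_C_mul_X_pow]
  refine sum_mem fun i _ ↦ ?_
  rw [← smul_eq_C_mul]
  refine Submodule.smul_mem_smul ?_ Submodule.mem_top
  rw [RingHom.mem_ker, ← coeff_map, ← coe_mapRingHom, RingHom.mem_ker.1 hp, coeff_zero]

section

variable {A : Type*} [Ring A] {L : Ideal A[X]} {F : A[X]}

theorem X_pow_mem_degreeLT_sup_of_monic_mem (hF : F.Monic) (hFL : F ∈ L) (k : ℕ) :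
    X ^ k ∈ degreeLT A F.natDegree ⊔ L.restrictScalars A := by
  induction k using Nat.strong_induction_on with
  | _ k ih =>
  obtain hk | ⟨d, rfl⟩ := (lt_or_ge k F.natDegree).imp_right Nat.exists_eq_add_of_le
  · exact Submodule.mem_sup_left (mem_degreeLT.2 ((degree_X_pow_le k).trans_lt (mod_cast hk)))
  have X_pow_eq : X ^ (F.natDegree + d) =
      X ^ d * F - ∑ i ∈ Finset.range F.natDegree, F.coeff i • X ^ (i + d) := by
    rw [eq_sub_iff_add_eq, X_pow_mul]
    conv_rhs => rw [hF.as_sum]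
    simp only [add_mul, Finset.sum_mul, smul_eq_C_mul, mul_assoc, ← pow_add]
  rw [X_pow_eq]
  refine sub_mem (Submodule.mem_sup_right (L.mul_mem_left _ hFL)) (sum_mem fun i hi ↦ ?_)
  exact Submodule.smul_mem _ _ (ih _ (Nat.add_lt_add_right (Finset.mem_range.1 hi) d))

theorem degreeLT_sup_eq_top_of_monic_mem (hF : F.Monic) (hFL : F ∈ L) :
    degreeLT A F.natDegree ⊔ L.restrictScalars A = ⊤ := by
  refine eq_top_iff.2 fun p _ ↦ ?_
  rw [p.as_sum_range_C_mul_X_pow]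
  refine sum_mem fun i _ ↦ ?_
  rw [← smul_eq_C_mul]
  exact Submodule.smul_mem _ _ (X_pow_mem_degreeLT_sup_of_monic_mem hF hFL i)

theorem finite_quotient_of_monic_mem (hF : F.Monic) (hFL : F ∈ L) :
    Module.Finite A (A[X] ⧸ L.restrictScalars A) := by
  have fg_degreeLT : (degreeLT A F.natDegree).FG := by
    classical exact ⟨_, degreeLT_eq_span_X_pow.symm⟩
  have map_eq_top : (degreeLT A F.natDegree).map (L.restrictScalars A).mkQ = ⊤ := by
    rw [Submodule.map_mkQ_eq_top, sup_comm, degreeLT_sup_eq_top_of_monic_mem hF hFL]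
  exact ⟨map_eq_top ▸ fg_degreeLT.map _⟩

theorem eq_top_of_monic_mem_of_map_eq_top {B : Type*} [Ring B] {φ : A →+* B}
    (hφ : Function.Surjective φ) (hker : RingHom.ker φ ≤ Ring.jacobson A)
    (hF : F.Monic) (hFL : F ∈ L) (hL : L.map (mapRingHom φ) = ⊤) : L = ⊤ := by
  have := finite_quotient_of_monic_mem hF hFL
  have ker_le : (RingHom.ker (mapRingHom φ)).restrictScalars A ≤ Ring.jacobson A • ⊤ :=
    (restrictScalars_ker_mapRingHom_le_smul_top φ).trans (Submodule.smul_mono_left hker)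
  have sup_ker : L ⊔ RingHom.ker (mapRingHom φ) = ⊤ := by
    rw [RingHom.ker, ← Ideal.comap_map_of_surjective _ (map_surjective φ hφ), hL, Ideal.comap_top]
  rw [← Submodule.restrictScalars_eq_top_iff A, Submodule.restrictScalars_sup] at sup_ker
  have sup_smul : L.restrictScalars A ⊔ Ring.jacobson A • ⊤ = ⊤ :=
    top_unique (sup_ker.ge.trans (sup_le_sup_left ker_le _))
  exact (Submodule.restrictScalars_eq_top_iff A _ _).1
    (eq_top_of_sup_jacobson_smul_top_eq_top sup_smul)

end

theorem leftCoprime_iff_reduction_general {A B : Type*} [Ring A] [Ring B] {φ : A →+* B}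
    (hφ : Function.Surjective φ) (hker : RingHom.ker φ ≤ Ring.jacobson A)
    {F1 : A[X]} (h1 : F1.Monic) (F2 : A[X]) :
    LeftCoprime F1 F2 ↔ LeftCoprime (F1.map φ) (F2.map φ) := by
  have map_span : (Ideal.span {F1, F2}).map (mapRingHom φ) = Ideal.span {F1.map φ, F2.map φ} := by
    rw [Ideal.map_span, Set.image_pair, coe_mapRingHom]
  rw [leftCoprime_iff_span_pair_eq_top, leftCoprime_iff_span_pair_eq_top, ← map_span]
  refine ⟨fun h ↦ ?_, eq_top_of_monic_mem_of_map_eq_top hφ hker h1 (Ideal.subset_span (.inl rfl))⟩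
  rw [h, Ideal.map_top]

/-- Over a Jacobson pair `(A,I)`, monic polynomials are left coprime iff
their reductions mod `I` are left coprime. -/
theorem leftCoprime_iff_reduction {A : Type*} [Ring A] (I : TwoSidedIdeal A)
    (hJac : IsJacobsonPair I)
    (F1 F2 : A[X]) (h1 : F1.Monic) (h2 : F2.Monic) :
    LeftCoprime F1 F2 ↔
      LeftCoprime (F1.map I.ringCon.mk') (F2.map I.ringCon.mk') :=
  leftCoprime_iff_reduction_general I.ringCon.mk'_surjective hJac.ker_mk'_le_jacobson h1 F2
end

section
/- Let (A,I) be a pair and let I = I_1 ⊇ I_2 ⊇ ⋯ be a filtration on (A,I) such that (A,I) is F-commutative, F-separated and F-complete, and such that I_n·[A,A] ⊆ I_{n+1} and I_n² ⊆ I_{n+1} for all n ≥ 1. Then (A,I) is left Henselian: (A,I) is a Jacobson pair, and for every monic polynomial F(x) ∈ A[x] and every factorization F̄(x) = f1(x)·f2(x) with f1(x), f2(x) ∈ (A/I)[x] left coprime monic polynomials, there exist unique monic polynomials F1(x), F2(x) ∈ A[x] such that F(x) = F1(x)·F2(x), F̄1(x) = f1(x) and F̄2(x) = f2(x). -/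
open Polynomial

universe u

/-!
Modulo `Iₙ₊₁` the elements of `Iₙ` are central and multiply to zero, and both properties pass to
the ideals `Iₙ[x]` of `A[x]`. Suppose `F ≡ F₁F₂` modulo `Iₙ[x]`, with error `E = F - F₁F₂`.
Replacing `Fᵢ` by `Fᵢ + Dᵢ` with `Dᵢ ∈ Iₙ[x]` changes the product by `D₁F₂ + F₁D₂` modulo
`Iₙ₊₁[x]`, so one Newton step amounts to solving `D₁F₂ + F₁D₂ ≡ E`. A Bézout relation
`G₁F₁ + G₂F₂ ≡ 1` modulo `Iₙ[x]` gives `E ≡ (EG₂)F₂ + F₁(EG₁)`, and division with remainder by the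
monic `F₁` and `F₂` brings `EG₂` and `EG₁` down to the right degrees without changing the
congruence. The solution of bounded degree is unique modulo `Iₙ₊₁[x]`, which yields uniqueness of
the lift.
-/

section Ideals

variable {R : Type*} [Ring R]

/-- The inclusion `[R, J] ⊆ K`. The pair `(A,I)` is F-commutative when this holds for each two
consecutive terms of the filtration. -/
def CommutatorLE (J K : TwoSidedIdeal R) : Prop :=
  ∀ a : R, ∀ b ∈ J, a * b - b * a ∈ K

/-- The inclusion `J² ⊆ K`. -/
def SquareLE (J K : TwoSidedIdeal R) : Prop :=
  ∀ a ∈ J, ∀ b ∈ J, a * b ∈ K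

/-- F-separatedness: the terms of the filtration intersect in `{0}`. -/
def FSeparated (Is : ℕ → TwoSidedIdeal R) : Prop :=
  ∀ x : R, (∀ n, x ∈ Is n) → x = 0

/-- F-completeness: every F-Cauchy sequence converges. -/
def FComplete (Is : ℕ → TwoSidedIdeal R) : Prop :=
  ∀ a : ℕ → R, (∀ k, a (k + 1) - a k ∈ Is k) → ∃ x : R, ∀ k, x - a k ∈ Is k

lemma ringCon_mk'_eq_zero_iff {J : TwoSidedIdeal R} {a : R} : J.ringCon.mk' a = 0 ↔ a ∈ J := by
  rw [← TwoSidedIdeal.mem_ker, TwoSidedIdeal.ker_ringCon_mk']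

lemma sub_bezout_mem {J K : TwoSidedIdeal R} (hcomm : CommutatorLE J K) (hsq : SquareLE J K)
    {e f₁ f₂ g₁ g₂ : R} (he : e ∈ J) (hg : g₁ * f₁ + g₂ * f₂ - 1 ∈ J) :
    e - (e * g₂ * f₂ + f₁ * (e * g₁)) ∈ K := by
  have hswap : f₁ * (e * g₁) - e * g₁ * f₁ ∈ K := hcomm _ _ (J.mul_mem_right _ _ he)
  have herror : e * (g₁ * f₁ + g₂ * f₂ - 1) ∈ K := hsq _ he _ hg
  convert neg_mem (add_mem hswap herror) using 1
  noncomm_ring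

/-- Newton's iteration `v ↦ (2 - vu)v` for the inverse of `u`, started at `1`. -/
def newtonInverse (u : R) : ℕ → R
  | 0 => 1
  | n + 1 => (2 - newtonInverse u n * u) * newtonInverse u n

lemma commute_newtonInverse (u : R) (n : ℕ) : Commute u (newtonInverse u n) := by
  induction n with
  | zero => exact Commute.one_right u
  | succ n ih =>
    exact ((Commute.ofNat_right u 2).sub_right (ih.mul_right (Commute.refl u))).mul_right ih

lemma newtonInverse_mul_sub_one_mem {Js : ℕ → TwoSidedIdeal R}
    (hsq : ∀ n, SquareLE (Js n) (Js (n + 1))) {u : R} (hu : u - 1 ∈ Js 0) (n : ℕ) :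
    newtonInverse u n * u - 1 ∈ Js n := by
  induction n with
  | zero => simpa [newtonInverse] using hu
  | succ n ih =>
    convert neg_mem (hsq n _ ih _ ih) using 1
    rw [newtonInverse]
    noncomm_ring

lemma newtonInverse_succ_sub_mem {Js : ℕ → TwoSidedIdeal R}
    (hsq : ∀ n, SquareLE (Js n) (Js (n + 1))) {u : R} (hu : u - 1 ∈ Js 0) (n : ℕ) :
    newtonInverse u (n + 1) - newtonInverse u n ∈ Js n := by
  convert neg_mem ((Js n).mul_mem_right _ (newtonInverse u n)
    (newtonInverse_mul_sub_one_mem hsq hu n)) using 1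
  rw [newtonInverse]
  noncomm_ring

lemma FComplete.isUnit_of_sub_one_mem {Is : ℕ → TwoSidedIdeal R} (hcomplete : FComplete Is)
    (hsep : FSeparated Is) (hsq : ∀ n, SquareLE (Is n) (Is (n + 1))) {u : R}
    (hu : u - 1 ∈ Is 0) : IsUnit u := by
  obtain ⟨v, hv⟩ := hcomplete _ (newtonInverse_succ_sub_mem hsq hu)
  have hinv := newtonInverse_mul_sub_one_mem hsq hu
  have hvu : v * u = 1 := sub_eq_zero.1 <| hsep _ fun n => by
    convert add_mem ((Is n).mul_mem_right _ u (hv n)) (hinv n) using 1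
    noncomm_ring
  have huv : u * v = 1 := sub_eq_zero.1 <| hsep _ fun n => by
    convert add_mem ((Is n).mul_mem_left u _ (hv n)) (hinv n) using 1
    rw [← (commute_newtonInverse u n).eq]
    noncomm_ring
  exact ⟨⟨u, v, huv, hvu⟩, rfl⟩

lemma FComplete.isJacobsonPair {Is : ℕ → TwoSidedIdeal R} (hcomplete : FComplete Is)
    (hsep : FSeparated Is) (hsq : ∀ n, SquareLE (Is n) (Is (n + 1))) :
    IsJacobsonPair (Is 0) := fun a ha =>
  hcomplete.isUnit_of_sub_one_mem hsep hsq (by rwa [add_sub_cancel_left])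

lemma IsJacobsonPair.nontrivial_quotient [Nontrivial R] {I : TwoSidedIdeal R}
    (hI : IsJacobsonPair I) : Nontrivial I.ringCon.Quotient := by
  refine ⟨1, 0, fun h => ?_⟩
  have one_mem : (1 : R) ∈ I := by rwa [← ringCon_mk'_eq_zero_iff, map_one]
  simpa using hI _ (neg_mem one_mem)

end Ideals

section PolynomialIdeal

variable {A : Type*} [Ring A] {J K : TwoSidedIdeal A}

/-- The two-sided ideal `J[x]` of polynomials with all coefficients in `J`, as the kernel of
reduction modulo `J`. -/
noncomputable def polynomialIdeal (J : TwoSidedIdeal A) : TwoSidedIdeal A[X] :=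
  TwoSidedIdeal.ker (mapRingHom J.ringCon.mk')

lemma mem_polynomialIdeal_iff_map_eq_zero {p : A[X]} :
    p ∈ polynomialIdeal J ↔ p.map J.ringCon.mk' = 0 := by
  rw [polynomialIdeal, TwoSidedIdeal.mem_ker, coe_mapRingHom]

lemma mem_polynomialIdeal {p : A[X]} : p ∈ polynomialIdeal J ↔ ∀ k, p.coeff k ∈ J := by
  simp only [mem_polynomialIdeal_iff_map_eq_zero, Polynomial.ext_iff, coeff_map, coeff_zero,
    ringCon_mk'_eq_zero_iff]

lemma sub_mem_polynomialIdeal {p q : A[X]} :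
    p - q ∈ polynomialIdeal J ↔ p.map J.ringCon.mk' = q.map J.ringCon.mk' := by
  rw [mem_polynomialIdeal_iff_map_eq_zero, Polynomial.map_sub, sub_eq_zero]

lemma polynomialIdeal_mono (h : J ≤ K) : polynomialIdeal J ≤ polynomialIdeal K :=
  fun _ hp => mem_polynomialIdeal.2 fun k => h (mem_polynomialIdeal.1 hp k)

lemma SquareLE.polynomial (h : SquareLE J K) :
    SquareLE (polynomialIdeal J) (polynomialIdeal K) := by
  intro p hp q hq
  rw [mem_polynomialIdeal] at *
  intro k
  rw [coeff_mul]
  exact sum_mem fun x _ => h _ (hp _) _ (hq _)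

lemma coeff_mul_sub_mul_comm (p q : A[X]) (k : ℕ) :
    (p * q - q * p).coeff k = ∑ x ∈ Finset.HasAntidiagonal.antidiagonal k,
      (p.coeff x.1 * q.coeff x.2 - q.coeff x.2 * p.coeff x.1) := by
  rw [coeff_sub, coeff_mul, coeff_mul, Finset.sum_sub_distrib,
    ← Finset.Nat.sum_antidiagonal_swap (f := fun x => q.coeff x.1 * p.coeff x.2)]
  simp only [Prod.fst_swap, Prod.snd_swap]

lemma CommutatorLE.polynomial (h : CommutatorLE J K) :
    CommutatorLE (polynomialIdeal J) (polynomialIdeal K) := by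
  intro p q hq
  rw [mem_polynomialIdeal] at *
  intro k
  rw [coeff_mul_sub_mul_comm]
  exact sum_mem fun x _ => h _ _ (hq _)

lemma FSeparated.polynomial {Is : ℕ → TwoSidedIdeal A} (h : FSeparated Is) :
    FSeparated fun n => polynomialIdeal (Is n) := fun _ hp =>
  Polynomial.ext fun k => h _ fun n => mem_polynomialIdeal.1 (hp n) k

lemma divByMonic_mem_polynomialIdeal {p q : A[X]} (hq : q.Monic) (hp : p ∈ polynomialIdeal J) :
    p /ₘ q ∈ polynomialIdeal J := by
  rw [mem_polynomialIdeal_iff_map_eq_zero] at *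
  rw [map_divByMonic _ hq, hp, zero_divByMonic]

lemma modByMonic_mem_polynomialIdeal {p q : A[X]} (hq : q.Monic) (hp : p ∈ polynomialIdeal J) :
    p %ₘ q ∈ polynomialIdeal J := by
  rw [mem_polynomialIdeal_iff_map_eq_zero] at *
  rw [map_modByMonic _ hq, hp, zero_modByMonic]

lemma mem_polynomialIdeal_of_add_monic_mul_mem {M Q H : A[X]} (hM : M.Monic)
    (hdeg : H.degree < M.degree) (h : H + M * Q ∈ polynomialIdeal J) :
    H ∈ polynomialIdeal J ∧ Q ∈ polynomialIdeal J := by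
  obtain ⟨hdiv, hmod⟩ := div_modByMonic_unique Q H hM ⟨rfl, hdeg⟩
  exact ⟨hmod ▸ modByMonic_mem_polynomialIdeal hM h, hdiv ▸ divByMonic_mem_polynomialIdeal hM h⟩

lemma exists_bezout_of_leftCoprime_map {Is : ℕ → TwoSidedIdeal A}
    (hsq : ∀ n, SquareLE (Is n) (Is (n + 1))) {F₁ F₂ : A[X]}
    (hcop : LeftCoprime (F₁.map (Is 0).ringCon.mk') (F₂.map (Is 0).ringCon.mk')) (n : ℕ) :
    ∃ G₁ G₂ : A[X], G₁ * F₁ + G₂ * F₂ - 1 ∈ polynomialIdeal (Is n) := by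
  obtain ⟨g₁, g₂, hg⟩ := hcop
  obtain ⟨G₁, rfl⟩ := map_surjective _ (Is 0).ringCon.mk'_surjective g₁
  obtain ⟨G₂, rfl⟩ := map_surjective _ (Is 0).ringCon.mk'_surjective g₂
  have hG : G₁ * F₁ + G₂ * F₂ - 1 ∈ polynomialIdeal (Is 0) := by
    rw [sub_mem_polynomialIdeal]
    simpa using hg
  set v := newtonInverse (G₁ * F₁ + G₂ * F₂) n
  refine ⟨v * G₁, v * G₂, ?_⟩
  rw [mul_assoc, mul_assoc, ← mul_add]
  exact newtonInverse_mul_sub_one_mem (Js := fun n => polynomialIdeal (Is n))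
    (fun n => (hsq n).polynomial) hG n

end PolynomialIdeal

section LinearizedEquation

variable {A : Type*} [Ring A] {J K : TwoSidedIdeal A} {F₁ F₂ G₁ G₂ : A[X]}

lemma degree_add_mul_lt_of_monic {D₁ D₂ : A[X]} (hF₁ : F₁.Monic) (hF₂ : F₂.Monic)
    (hdeg₁ : D₁.degree < F₁.degree) (hdeg₂ : D₂.degree < F₂.degree) :
    (D₁ * F₂ + F₁ * D₂).degree < (F₁ * F₂).degree := by
  have hleft : (D₁ * F₂).degree < (F₁ * F₂).degree := by
    rw [hF₂.degree_mul, hF₂.degree_mul]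
    exact WithBot.add_lt_add_right (degree_ne_bot.2 (ne_zero_of_degree_gt hdeg₂)) hdeg₁
  have hright : (F₁ * D₂).degree < (F₁ * F₂).degree := by
    rw [hF₁.degree_mul_comm, hF₁.degree_mul_comm, hF₁.degree_mul, hF₁.degree_mul]
    exact WithBot.add_lt_add_right (degree_ne_bot.2 (ne_zero_of_degree_gt hdeg₁)) hdeg₂
  exact (degree_add_le _ _).trans_lt (max_lt hleft hright)

lemma exists_sub_add_mul_mem [Nontrivial A] (hcomm : CommutatorLE J K) (hsq : SquareLE J K)
    (hF₁ : F₁.Monic) (hF₂ : F₂.Monic) (hG : G₁ * F₁ + G₂ * F₂ - 1 ∈ polynomialIdeal J)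
    {E : A[X]} (hE : E ∈ polynomialIdeal J) (hdeg : E.degree < (F₁ * F₂).degree) :
    ∃ D₁ ∈ polynomialIdeal J, ∃ D₂ ∈ polynomialIdeal J, D₁.degree < F₁.degree ∧
      D₂.degree < F₂.degree ∧ E - (D₁ * F₂ + F₁ * D₂) ∈ polynomialIdeal K := by
  set Q₁ := E * G₂ /ₘ F₁
  set D₁ := E * G₂ %ₘ F₁
  set H := E * G₁ + Q₁ * F₂
  set D₂ := H %ₘ F₂
  have hEG₂ : E * G₂ ∈ polynomialIdeal J := (polynomialIdeal J).mul_mem_right _ _ hE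
  have hH : H ∈ polynomialIdeal J :=
    add_mem ((polynomialIdeal J).mul_mem_right _ _ hE)
      ((polynomialIdeal J).mul_mem_right _ _ (divByMonic_mem_polynomialIdeal hF₁ hEG₂))
  have hdeg₁ : D₁.degree < F₁.degree := degree_modByMonic_lt _ hF₁
  have hdeg₂ : D₂.degree < F₂.degree := degree_modByMonic_lt _ hF₂
  have hcongr : E - (D₁ * F₂ + F₁ * D₂) + (F₁ * F₂) * -(H /ₘ F₂) ∈ polynomialIdeal K := by
    convert sub_bezout_mem hcomm.polynomial hsq.polynomial hE hG using 1
    calc E - (D₁ * F₂ + F₁ * D₂) + (F₁ * F₂) * -(H /ₘ F₂)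
        = E - (D₁ * F₂ + F₁ * (D₂ + F₂ * (H /ₘ F₂))) := by noncomm_ring
      _ = E - (D₁ * F₂ + F₁ * H) := by rw [modByMonic_add_div]
      _ = E - ((D₁ + F₁ * Q₁) * F₂ + F₁ * (E * G₁)) := by simp only [H]; noncomm_ring
      _ = E - (E * G₂ * F₂ + F₁ * (E * G₁)) := by rw [modByMonic_add_div]
  have hdeg_sub : (E - (D₁ * F₂ + F₁ * D₂)).degree < (F₁ * F₂).degree :=
    (degree_sub_le _ _).trans_lt
      (max_lt hdeg (degree_add_mul_lt_of_monic hF₁ hF₂ hdeg₁ hdeg₂))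
  exact ⟨D₁, modByMonic_mem_polynomialIdeal hF₁ hEG₂, D₂, modByMonic_mem_polynomialIdeal hF₂ hH,
    hdeg₁, hdeg₂, (mem_polynomialIdeal_of_add_monic_mul_mem (hF₁.mul hF₂) hdeg_sub hcongr).1⟩

lemma mem_polynomialIdeal_of_add_mul_mem (hcomm : CommutatorLE J K) (hsq : SquareLE J K)
    (hF₁ : F₁.Monic) (hG : G₁ * F₁ + G₂ * F₂ - 1 ∈ polynomialIdeal J) {D₁ D₂ : A[X]}
    (hD₁ : D₁ ∈ polynomialIdeal J) (hdeg : D₁.degree < F₁.degree)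
    (h : D₁ * F₂ + F₁ * D₂ ∈ polynomialIdeal K) :
    D₁ ∈ polynomialIdeal K ∧ D₂ ∈ polynomialIdeal K := by
  have hswap : D₁ * G₂ * F₂ - D₁ * F₂ * G₂ ∈ polynomialIdeal K := by
    have hleft := hcomm.polynomial F₂ _ ((polynomialIdeal J).mul_mem_right _ G₂ hD₁)
    have hright := (polynomialIdeal K).mul_mem_right _ G₂ (hcomm.polynomial F₂ _ hD₁)
    convert sub_mem hright hleft using 1
    noncomm_ring
  have hcongr : D₁ + F₁ * (D₂ * G₂ - D₁ * G₁) ∈ polynomialIdeal K := by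
    have hbezout := sub_bezout_mem hcomm.polynomial hsq.polynomial hD₁ hG
    convert add_mem (add_mem hbezout hswap) ((polynomialIdeal K).mul_mem_right _ G₂ h) using 1
    noncomm_ring
  have hD₁K := (mem_polynomialIdeal_of_add_monic_mul_mem hF₁ hdeg hcongr).1
  have hF₁D₂ : 0 + F₁ * D₂ ∈ polynomialIdeal K := by
    convert sub_mem h ((polynomialIdeal K).mul_mem_right _ F₂ hD₁K) using 1
    noncomm_ring
  have hdeg_zero : (0 : A[X]).degree < F₁.degree :=
    bot_lt_iff_ne_bot.2 (degree_ne_bot.2 (ne_zero_of_degree_gt hdeg))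
  exact ⟨hD₁K, (mem_polynomialIdeal_of_add_monic_mul_mem hF₁ hdeg_zero hF₁D₂).2⟩

end LinearizedEquation

section Limits

variable {A : Type*} [Ring A] {Is : ℕ → TwoSidedIdeal A}

lemma FComplete.exists_polynomial_limit (hcomplete : FComplete Is) {P : ℕ → A[X]} {d : ℕ}
    (hdeg : ∀ k, (P k).degree < d) (hP : ∀ k, P (k + 1) - P k ∈ polynomialIdeal (Is k)) :
    ∃ L : A[X], L.degree < d ∧ ∀ k, L - P k ∈ polynomialIdeal (Is k) := by
  have hcoeff (i : ℕ) : ∃ x : A, ∀ k, x - (P k).coeff i ∈ Is k :=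
    hcomplete _ fun k => by simpa using mem_polynomialIdeal.1 (hP k) i
  choose x hx using hcoeff
  refine ⟨∑ i : Fin d, C (x i) * X ^ (i : ℕ), degree_sum_fin_lt _, fun k => ?_⟩
  rw [mem_polynomialIdeal]
  intro i
  rw [Fin.sum_univ_eq_sum_range (fun i => C (x i) * X ^ i), coeff_sub, finsetSum_coeff]
  simp only [coeff_C_mul_X_pow, Finset.sum_ite_eq, Finset.mem_range]
  split_ifs with hi
  · exact hx i k
  · rw [coeff_eq_zero_of_degree_lt ((hdeg k).trans_le (Nat.cast_le.2 (not_lt.1 hi))), sub_zero]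
    exact zero_mem _

lemma FComplete.exists_monic_limit [Nontrivial A] (hcomplete : FComplete Is) {P : ℕ → A[X]}
    {d : ℕ} (hmonic : ∀ k, (P k).Monic) (hdeg : ∀ k, (P k).natDegree = d)
    (hP : ∀ k, P (k + 1) - P k ∈ polynomialIdeal (Is k)) :
    ∃ L : A[X], L.Monic ∧ ∀ k, L - P k ∈ polynomialIdeal (Is k) := by
  have hdeg_tail (k : ℕ) : (P k - X ^ d).degree < (d : WithBot ℕ) := by
    have hdegree : (P k).degree = (X ^ d : A[X]).degree := by
      rw [degree_eq_natDegree (hmonic k).ne_zero, hdeg, degree_X_pow]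
    simpa using degree_sub_lt_right hdegree (monic_X_pow d).ne_zero
      ((hmonic k).trans (monic_X_pow d).symm)
  obtain ⟨L, hL, hlim⟩ := hcomplete.exists_polynomial_limit hdeg_tail (by simpa using hP)
  refine ⟨X ^ d + L, monic_X_pow_add hL, fun k => ?_⟩
  convert hlim k using 1
  abel

end Limits

section RingHom

variable {A B : Type*} [Ring A] [Ring B] {φ : A →+* B}

lemma exists_monic_map_eq (hφ : Function.Surjective φ) {f : B[X]} (hf : f.Monic) :
    ∃ P : A[X], P.Monic ∧ P.map φ = f := by
  obtain ⟨P, hmap, -, hP⟩ :=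
    lifts_and_natDegree_eq_and_monic ((mem_lifts _).2 (map_surjective _ hφ f)) hf
  exact ⟨P, hP, hmap⟩

lemma degree_sub_lt_of_map_eq [Nontrivial B] {P Q : A[X]} (hP : P.Monic) (hQ : Q.Monic)
    (h : P.map φ = Q.map φ) : (P - Q).degree < Q.degree := by
  have : Nontrivial A := φ.domain_nontrivial
  have hdeg : P.degree = Q.degree := by rw [← hP.degree_map φ, h, hQ.degree_map]
  exact degree_sub_lt_right hdeg hQ.ne_zero (hP.trans hQ.symm)

end RingHom

section Lifting

variable {A : Type*} [Ring A] {I J K : TwoSidedIdeal A} {F : A[X]}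
  {f₁ f₂ : I.ringCon.Quotient[X]}

/-- The pair `p` consists of monic lifts of `f₁` and `f₂` whose product agrees with `F` modulo
`J[x]`. -/
structure IsFactorizationMod (J : TwoSidedIdeal A) (F : A[X]) (f₁ f₂ : I.ringCon.Quotient[X])
    (p : A[X] × A[X]) : Prop where
  monic_fst : p.1.Monic
  monic_snd : p.2.Monic
  map_fst : p.1.map I.ringCon.mk' = f₁
  map_snd : p.2.map I.ringCon.mk' = f₂
  sub_mul_mem : F - p.1 * p.2 ∈ polynomialIdeal J

lemma exists_isFactorizationMod (hf₁ : f₁.Monic) (hf₂ : f₂.Monic)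
    (hF : F.map I.ringCon.mk' = f₁ * f₂) : ∃ p, IsFactorizationMod I F f₁ f₂ p := by
  obtain ⟨P₁, hP₁, rfl⟩ := exists_monic_map_eq I.ringCon.mk'_surjective hf₁
  obtain ⟨P₂, hP₂, rfl⟩ := exists_monic_map_eq I.ringCon.mk'_surjective hf₂
  exact ⟨(P₁, P₂), hP₁, hP₂, rfl, rfl,
    sub_mem_polynomialIdeal.2 (hF.trans (Polynomial.map_mul _).symm)⟩

lemma IsFactorizationMod.exists_refinement [Nontrivial I.ringCon.Quotient]
    (hJI : J ≤ I) (hcomm : CommutatorLE J K) (hsq : SquareLE J K) (hF : F.Monic)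
    {p : A[X] × A[X]} (hp : IsFactorizationMod J F f₁ f₂ p)
    (hbezout : ∃ G₁ G₂ : A[X], G₁ * p.1 + G₂ * p.2 - 1 ∈ polynomialIdeal J) :
    ∃ q, IsFactorizationMod K F f₁ f₂ q ∧
      q.1 - p.1 ∈ polynomialIdeal J ∧ q.2 - p.2 ∈ polynomialIdeal J := by
  have : Nontrivial A := I.ringCon.mk'.domain_nontrivial
  obtain ⟨G₁, G₂, hG⟩ := hbezout
  have hdeg : (F - p.1 * p.2).degree < (p.1 * p.2).degree :=
    degree_sub_lt_of_map_eq hF (hp.monic_fst.mul hp.monic_snd)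
      (sub_mem_polynomialIdeal.1 (polynomialIdeal_mono hJI hp.sub_mul_mem))
  obtain ⟨D₁, hD₁, D₂, hD₂, hdeg₁, hdeg₂, hsolve⟩ :=
    exists_sub_add_mul_mem hcomm hsq hp.monic_fst hp.monic_snd hG hp.sub_mul_mem hdeg
  have hmap {D : A[X]} (hD : D ∈ polynomialIdeal J) (P : A[X]) :
      (P + D).map I.ringCon.mk' = P.map I.ringCon.mk' :=
    sub_mem_polynomialIdeal.1 (polynomialIdeal_mono hJI (by rwa [add_sub_cancel_left]))
  refine ⟨(p.1 + D₁, p.2 + D₂), ⟨hp.monic_fst.add_of_left hdeg₁, hp.monic_snd.add_of_left hdeg₂,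
    (hmap hD₁ _).trans hp.map_fst, (hmap hD₂ _).trans hp.map_snd, ?_⟩, ?_, ?_⟩
  · convert sub_mem hsolve (hsq.polynomial _ hD₁ _ hD₂) using 1
    noncomm_ring
  · rwa [add_sub_cancel_left]
  · rwa [add_sub_cancel_left]

end Lifting

section Filtration

variable {A : Type*} [Ring A] {Is : ℕ → TwoSidedIdeal A} {F : A[X]}
  {f₁ f₂ : (Is 0).ringCon.Quotient[X]}

lemma exists_seq_isFactorizationMod [Nontrivial (Is 0).ringCon.Quotient] (hanti : Antitone Is)
    (hcomm : ∀ n, CommutatorLE (Is n) (Is (n + 1))) (hsq : ∀ n, SquareLE (Is n) (Is (n + 1)))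
    (hF : F.Monic) (hf₁ : f₁.Monic) (hf₂ : f₂.Monic) (hcop : LeftCoprime f₁ f₂)
    (hmap : F.map (Is 0).ringCon.mk' = f₁ * f₂) :
    ∃ s : ℕ → A[X] × A[X], ∀ n, IsFactorizationMod (Is n) F f₁ f₂ (s n) ∧
      (s (n + 1)).1 - (s n).1 ∈ polynomialIdeal (Is n) ∧
      (s (n + 1)).2 - (s n).2 ∈ polynomialIdeal (Is n) := by
  have hrefine (n : ℕ) (p : A[X] × A[X]) (hp : IsFactorizationMod (Is n) F f₁ f₂ p) :=
    hp.exists_refinement (hanti n.zero_le) (hcomm n) (hsq n) hF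
      (exists_bezout_of_leftCoprime_map hsq (by rwa [hp.map_fst, hp.map_snd]) n)
  choose! next hnext using hrefine
  obtain ⟨p, hp⟩ := exists_isFactorizationMod hf₁ hf₂ hmap
  let s : ℕ → A[X] × A[X] := fun n => Nat.rec p next n
  have hs (n : ℕ) : IsFactorizationMod (Is n) F f₁ f₂ (s n) := by
    induction n with
    | zero => exact hp
    | succ n ih => exact (hnext n _ ih).1
  exact ⟨s, fun n => ⟨hs n, (hnext n _ (hs n)).2⟩⟩

lemma exists_monic_mul_eq_of_map_eq_mul [Nontrivial (Is 0).ringCon.Quotient]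
    (hanti : Antitone Is) (hcomm : ∀ n, CommutatorLE (Is n) (Is (n + 1)))
    (hsep : FSeparated Is) (hcomplete : FComplete Is)
    (hsq : ∀ n, SquareLE (Is n) (Is (n + 1)))
    (hF : F.Monic) (hf₁ : f₁.Monic) (hf₂ : f₂.Monic) (hcop : LeftCoprime f₁ f₂)
    (hmap : F.map (Is 0).ringCon.mk' = f₁ * f₂) :
    ∃ p : A[X] × A[X], p.1.Monic ∧ p.2.Monic ∧ F = p.1 * p.2 ∧
      p.1.map (Is 0).ringCon.mk' = f₁ ∧ p.2.map (Is 0).ringCon.mk' = f₂ := by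
  have : Nontrivial A := (Is 0).ringCon.mk'.domain_nontrivial
  obtain ⟨s, hs⟩ := exists_seq_isFactorizationMod hanti hcomm hsq hF hf₁ hf₂ hcop hmap
  obtain ⟨L₁, hL₁, hlim₁⟩ := hcomplete.exists_monic_limit (fun n => (hs n).1.monic_fst)
    (fun n => by rw [← (hs n).1.monic_fst.natDegree_map (Is 0).ringCon.mk', (hs n).1.map_fst])
    (fun n => (hs n).2.1)
  obtain ⟨L₂, hL₂, hlim₂⟩ := hcomplete.exists_monic_limit (fun n => (hs n).1.monic_snd)
    (fun n => by rw [← (hs n).1.monic_snd.natDegree_map (Is 0).ringCon.mk', (hs n).1.map_snd])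
    (fun n => (hs n).2.2)
  have hmul : F = L₁ * L₂ := sub_eq_zero.1 <| hsep.polynomial _ fun n => by
    have hleft := (polynomialIdeal (Is n)).mul_mem_right _ (s n).2 (hlim₁ n)
    have hright := (polynomialIdeal (Is n)).mul_mem_left L₁ _ (hlim₂ n)
    convert sub_mem (sub_mem (hs n).1.sub_mul_mem hleft) hright using 1
    noncomm_ring
  exact ⟨(L₁, L₂), hL₁, hL₂, hmul,
    (sub_mem_polynomialIdeal.1 (hlim₁ 0)).trans (hs 0).1.map_fst,
    (sub_mem_polynomialIdeal.1 (hlim₂ 0)).trans (hs 0).1.map_snd⟩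

lemma eq_and_eq_of_mul_eq_mul [Nontrivial (Is 0).ringCon.Quotient]
    (hcomm : ∀ n, CommutatorLE (Is n) (Is (n + 1))) (hsep : FSeparated Is)
    (hsq : ∀ n, SquareLE (Is n) (Is (n + 1))) {P₁ P₂ Q₁ Q₂ : A[X]}
    (hP₁ : P₁.Monic) (hQ₁ : Q₁.Monic)
    (hcop : LeftCoprime (P₁.map (Is 0).ringCon.mk') (P₂.map (Is 0).ringCon.mk'))
    (hmap₁ : Q₁.map (Is 0).ringCon.mk' = P₁.map (Is 0).ringCon.mk')
    (hmap₂ : Q₂.map (Is 0).ringCon.mk' = P₂.map (Is 0).ringCon.mk')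
    (hmul : Q₁ * Q₂ = P₁ * P₂) : Q₁ = P₁ ∧ Q₂ = P₂ := by
  have hdeg := degree_sub_lt_of_map_eq hQ₁ hP₁ hmap₁
  have hmem (n : ℕ) :
      Q₁ - P₁ ∈ polynomialIdeal (Is n) ∧ Q₂ - P₂ ∈ polynomialIdeal (Is n) := by
    induction n with
    | zero => exact ⟨sub_mem_polynomialIdeal.2 hmap₁, sub_mem_polynomialIdeal.2 hmap₂⟩
    | succ n ih =>
      obtain ⟨G₁, G₂, hG⟩ := exists_bezout_of_leftCoprime_map hsq hcop n
      refine mem_polynomialIdeal_of_add_mul_mem (hcomm n) (hsq n) hP₁ hG ih.1 hdeg ?_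
      have hlinear : (Q₁ - P₁) * P₂ + P₁ * (Q₂ - P₂) = -((Q₁ - P₁) * (Q₂ - P₂)) := by
        rw [← sub_eq_zero, ← sub_eq_zero.2 hmul]
        noncomm_ring
      rw [hlinear]
      exact neg_mem ((hsq n).polynomial _ ih.1 _ ih.2)
  exact ⟨sub_eq_zero.1 (hsep.polynomial _ fun n => (hmem n).1),
    sub_eq_zero.1 (hsep.polynomial _ fun n => (hmem n).2)⟩

end Filtration

lemma isLeftHenselianPair_of_subsingleton {A : Type*} [Ring A] [Subsingleton A]
    (I : TwoSidedIdeal A) : IsLeftHenselianPair I := by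
  have : Subsingleton I.ringCon.Quotient := I.ringCon.mk'_surjective.subsingleton
  refine ⟨fun _ _ => isUnit_of_subsingleton _, fun F hF f₁ f₂ _ _ _ _ => ?_⟩
  exact ⟨(F, F), ⟨hF, hF, Subsingleton.elim _ _, Subsingleton.elim _ _, Subsingleton.elim _ _⟩,
    fun _ _ => Subsingleton.elim _ _⟩

/-- Theorem `HenselianRings`: if `(A,I)` has a filtration with respect to
which it is F-commutative, F-separated and F-complete, and `Iₙ·[A,A] ⊆ Iₙ₊₁` and
`Iₙ² ⊆ Iₙ₊₁` for all `n`, then `(A,I)` is left Henselian.  (`Is n` denotes `I_{n+1}`.) -/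
theorem leftHenselian_of_filtration {A : Type*} [Ring A] (I : TwoSidedIdeal A)
    (Is : ℕ → TwoSidedIdeal A) (h0 : Is 0 = I)
    (hdesc : ∀ n, Is (n + 1) ≤ Is n)
    (hFcomm : ∀ n, ∀ a : A, ∀ b ∈ Is n, a * b - b * a ∈ Is (n + 1))
    (hsep : ∀ x : A, (∀ n, x ∈ Is n) → x = 0)
    (hcomplete : ∀ a : ℕ → A, (∀ k, a (k + 1) - a k ∈ Is k) →
      ∃ x : A, ∀ k, x - a k ∈ Is k)
    (hIcomm : ∀ n, ∀ c ∈ Is n, ∀ a b : A, c * (a * b - b * a) ∈ Is (n + 1))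
    (hsq : ∀ n, ∀ a ∈ Is n, ∀ b ∈ Is n, a * b ∈ Is (n + 1)) :
    IsLeftHenselianPair I := by
  subst h0
  rcases subsingleton_or_nontrivial A with _ | _
  · exact isLeftHenselianPair_of_subsingleton _
  have hjacobson : IsJacobsonPair (Is 0) := FComplete.isJacobsonPair hcomplete hsep hsq
  have : Nontrivial (Is 0).ringCon.Quotient := hjacobson.nontrivial_quotient
  refine ⟨hjacobson, fun F hF f1 f2 hf1 hf2 hcop hmap => ?_⟩
  obtain ⟨⟨P₁, P₂⟩, hP₁, hP₂, hmul, rfl, rfl⟩ := exists_monic_mul_eq_of_map_eq_mul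
    (antitone_nat_of_succ_le hdesc) hFcomm hsep hcomplete hsq hF hf1 hf2 hcop hmap
  refine ⟨(P₁, P₂), ⟨hP₁, hP₂, hmul, rfl, rfl⟩, ?_⟩
  rintro ⟨Q₁, Q₂⟩ ⟨hQ₁, -, hmul', hmap₁, hmap₂⟩
  exact Prod.ext_iff.2 <| eq_and_eq_of_mul_eq_mul hFcomm hsep hsq hP₁ hQ₁ hcop hmap₁ hmap₂
    (hmul'.symm.trans hmul)
end

section
/- Let (A,I) be a perfect pair, let F(x) ∈ A[x] be a monic polynomial, and suppose F̄(x) = f1(x)·f2(x) where f1(x), f2(x) ∈ (A/I)[x] are left coprime monic polynomials. Then there exist a perfect Jacobson pair (B,J), a morphism of pairs Φ:(A,I)→(B,J), and monic polynomials F1(x), F2(x) ∈ B[x] such that Φ(F)(x) = F1(x)·F2(x), with the reduction of F1 modulo J equal to the image of f1 and the reduction of F2 modulo J equal to the image of f2 under the induced map (A/I)[x]→(B/J)[x], and with the following universal property: for every morphism of pairs φ:(A,I)→(C,K) with (C,K) a perfect Jacobson pair, if φ(F)(x) = G1(x)·G2(x) for monic polynomials G1(x), G2(x) ∈ C[x]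 whose reductions modulo K equal the images of f1(x) and f2(x) respectively, then there exists a unique morphism of pairs ψ:(B,J)→(C,K) with φ = ψ∘Φ. -/
open Polynomial

universe u

/-!
Call a perfect Jacobson pair under `(A, I)` with a monic factorization of `F` lifting `f1 * f2` a
*lift*. In a lift `(C, K)` the factorization is unique: left coprimality mod `K` lifts to `C` by
Nakayama's lemma, and if two factorizations agree modulo one step of the commutator filtration,
then their differences are central modulo the next step, which forces them to agree there as well.

The universal lift `B` is the division closure, inside the product of all lifts, of `A` and the
coefficients of both factors. It maps onto the coordinate of the lift `(A / I, 0)`, and `J` is the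
kernel. Perfectness, the factorization and the invertibility of `1 + J` are checked coordinatewise,
and uniqueness of factorizations determines a morphism out of `B` on its generators. The division
closure is the set of values of rational expressions, so it is small enough to live in the universe
of `A`.
-/

section Quotient

variable {R : Type*} [Ring R] (I : TwoSidedIdeal R)

theorem ringCon_mk'_eq_zero_iff_s11 {x : R} : I.ringCon.mk' x = 0 ↔ x ∈ I := by
  rw [← TwoSidedIdeal.mem_ker, TwoSidedIdeal.ker_ringCon_mk']

theorem ringCon_mk'_eq_iff {x y : R} : I.ringCon.mk' x = I.ringCon.mk' y ↔ x - y ∈ I := by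
  rw [← sub_eq_zero, ← map_sub, ringCon_mk'_eq_zero_iff_s11]

theorem map_ringCon_mk'_eq_iff {P Q : R[X]} :
    P.map I.ringCon.mk' = Q.map I.ringCon.mk' ↔ ∀ k, P.coeff k - Q.coeff k ∈ I := by
  simp only [Polynomial.ext_iff, coeff_map, ringCon_mk'_eq_iff]

end Quotient

namespace IsPairHom

variable {A B C : Type*} [Ring A] [Ring B] [Ring C] {I : TwoSidedIdeal A} {J : TwoSidedIdeal B}
  {K : TwoSidedIdeal C} {φ : A →+* B} {ψ : B →+* C}

/-- The map `A / I → B / J` induced by a morphism of pairs `(A, I) → (B, J)`. -/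
def quotientMap (hφ : IsPairHom I J φ) : I.ringCon.Quotient →+* J.ringCon.Quotient :=
  I.ringCon.lift (J.ringCon.mk'.comp φ) fun x y hxy => by
    change J.ringCon.mk' (φ x) = J.ringCon.mk' (φ y)
    rwa [ringCon_mk'_eq_iff, ← map_sub, hφ, ← TwoSidedIdeal.rel_iff]

theorem quotientMap_comp_mk' (hφ : IsPairHom I J φ) :
    hφ.quotientMap.comp I.ringCon.mk' = J.ringCon.mk'.comp φ := rfl

theorem quotientMap_mk' (hφ : IsPairHom I J φ) (a : A) :
    hφ.quotientMap (I.ringCon.mk' a) = J.ringCon.mk' (φ a) := rfl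

theorem eq_quotientMap (hφ : IsPairHom I J φ) {χ : I.ringCon.Quotient →+* J.ringCon.Quotient}
    (hχ : χ.comp I.ringCon.mk' = J.ringCon.mk'.comp φ) : χ = hφ.quotientMap :=
  RingCon.lift_unique _ χ hχ

theorem quotientMap_eq_zero_iff (hφ : IsPairHom I J φ) {x : I.ringCon.Quotient} :
    hφ.quotientMap x = 0 ↔ x = 0 := by
  obtain ⟨a, rfl⟩ := I.ringCon.mk'_surjective x
  rw [quotientMap_mk', ringCon_mk'_eq_zero_iff_s11, ringCon_mk'_eq_zero_iff_s11, hφ a]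

theorem comp (hψ : IsPairHom J K ψ) (hφ : IsPairHom I J φ) : IsPairHom I K (ψ.comp φ) :=
  fun a => (hψ (φ a)).trans (hφ a)

theorem quotientMap_comp (hψ : IsPairHom J K ψ) (hφ : IsPairHom I J φ) :
    (hψ.comp hφ).quotientMap = hψ.quotientMap.comp hφ.quotientMap :=
  ((hψ.comp hφ).eq_quotientMap rfl).symm

theorem map_mem_commFilt (hφ : IsPairHom I J φ) (n : ℕ) {x : A} (hx : x ∈ commFilt I n) :
    φ x ∈ commFilt J n := by
  induction n generalizing x with
  | zero => exact (hφ x).2 hx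
  | succ n ih =>
    suffices commFilt I (n + 1) ≤ (commFilt J (n + 1)).comap φ from
      (TwoSidedIdeal.mem_comap φ).1 (this hx)
    refine TwoSidedIdeal.span_le.2 ?_
    rintro _ ⟨a, b, hb, rfl⟩
    refine (TwoSidedIdeal.mem_comap φ).2 (TwoSidedIdeal.subset_span ⟨φ a, φ b, ih hb, ?_⟩)
    simp only [map_sub, map_mul]

end IsPairHom

namespace IsJacobsonPair

variable {R : Type*} [Ring R] {K : TwoSidedIdeal R}

theorem nontrivial_quotient_s11 [Nontrivial R] (hK : IsJacobsonPair K) :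
    Nontrivial K.ringCon.Quotient := by
  refine nontrivial_of_ne (K.ringCon.mk' 1) 0 fun h => not_isUnit_zero (M₀ := R) ?_
  simpa using hK (-1) (K.neg_mem ((ringCon_mk'_eq_zero_iff_s11 K).1 h))

theorem mem_jacobson (hK : IsJacobsonPair K) {x : R} (hx : x ∈ K) : x ∈ Ring.jacobson R := by
  rw [Ring.jacobson_eq_sInf_isMaximal, Ideal.mem_sInf]
  intro M hM
  by_contra hxM
  obtain ⟨y, i, hi, hyx⟩ := Ideal.IsMaximal.exists_inv hM hxM
  have hi_unit : IsUnit i := by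
    rw [show i = 1 + -(y * x) by rw [← hyx]; abel]
    exact hK _ (K.neg_mem (K.mul_mem_left y x hx))
  exact hM.ne_top (Ideal.eq_top_of_isUnit_mem _ hi hi_unit)

variable {Q : Type*} [Ring Q] {G : R[X]} {f : Q[X]} {χ : Q →+* K.ringCon.Quotient}

theorem natDegree_le_of_map_eq_map (hK : IsJacobsonPair K) (hG : G.Monic)
    (h : G.map K.ringCon.mk' = f.map χ) : G.natDegree ≤ f.natDegree := by
  nontriviality R
  have := hK.nontrivial_quotient_s11
  rw [← hG.natDegree_map K.ringCon.mk', h]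
  exact natDegree_map_le

theorem coeff_natDegree_eq_one_of_map_eq_map (hK : IsJacobsonPair K) (hG : G.Monic)
    (hf : f.Monic) (h : G.map K.ringCon.mk' = f.map χ) : G.coeff f.natDegree = 1 := by
  nontriviality R
  have := hK.nontrivial_quotient_s11
  rw [← hf.natDegree_map χ, ← h, hG.natDegree_map K.ringCon.mk', hG.coeff_natDegree]

end IsJacobsonPair

section LeftCoprime

theorem LeftCoprime.map {R S : Type*} [Semiring R] [Semiring S] {f g : R[X]}
    (h : LeftCoprime f g) (φ : R →+* S) : LeftCoprime (f.map φ) (g.map φ) := by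
  obtain ⟨a, b, hab⟩ := h
  refine ⟨a.map φ, b.map φ, ?_⟩
  rw [← Polynomial.map_mul, ← Polynomial.map_mul, ← Polynomial.map_add, hab, Polynomial.map_one]

variable {R : Type*} [Ring R]

theorem degreeLT_sup_restrictScalars_eq_top {G : R[X]} (hG : G.Monic) {L : Ideal R[X]}
    (hGL : G ∈ L) : degreeLT R G.natDegree ⊔ L.restrictScalars R = ⊤ := by
  set N := degreeLT R G.natDegree ⊔ L.restrictScalars R
  have X_pow_mul_eq (k : ℕ) : X ^ k * G = X ^ (k + G.natDegree) +
      ∑ i ∈ Finset.range G.natDegree, G.coeff i • X ^ (k + i) := by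
    conv_lhs => rw [hG.as_sum]
    simp only [X_pow_mul, add_mul, Finset.sum_mul, ← smul_eq_C_mul, smul_mul_assoc, ← pow_add,
      add_comm k]
  have X_pow_mem (m : ℕ) : (X ^ m : R[X]) ∈ N := by
    induction m using Nat.strong_induction_on with
    | _ m ih =>
      rcases lt_or_ge m G.natDegree with hm | hm
      · refine Submodule.mem_sup_left (mem_degreeLT.2 ?_)
        exact (degree_X_pow_le m).trans_lt (by exact_mod_cast hm)
      have X_pow_eq : (X ^ m : R[X]) = X ^ (m - G.natDegree) * G -
          ∑ i ∈ Finset.range G.natDegree, G.coeff i • X ^ (m - G.natDegree + i) := by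
        rw [X_pow_mul_eq, Nat.sub_add_cancel hm, add_sub_cancel_right]
      rw [X_pow_eq]
      refine N.sub_mem (Submodule.mem_sup_right (L.mul_mem_left _ hGL)) (N.sum_mem fun i hi => ?_)
      exact N.smul_mem _ (ih _ (by have := Finset.mem_range.1 hi; omega))
  refine eq_top_iff.2 fun p _ => ?_
  rw [p.as_sum_range]
  refine N.sum_mem fun i _ => ?_
  rw [← smul_X_eq_monomial]
  exact N.smul_mem _ (X_pow_mem i)

theorem fg_top_quotient_restrictScalars {G : R[X]} (hG : G.Monic) {L : Ideal R[X]}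
    (hGL : G ∈ L) : (⊤ : Submodule R (R[X] ⧸ L.restrictScalars R)).FG := by
  classical
  have hfg : (degreeLT R G.natDegree).FG := ⟨_, degreeLT_eq_span_X_pow.symm⟩
  convert hfg.map (L.restrictScalars R).mkQ using 1
  rw [← Submodule.range_mkQ (L.restrictScalars R), LinearMap.range_eq_map,
    ← degreeLT_sup_restrictScalars_eq_top hG hGL, Submodule.map_sup, Submodule.mkQ_map_self,
    sup_bot_eq]

theorem mkQ_mem_smul_top_of_forall_coeff_mem (N : Submodule R R[X]) {𝔞 : Ideal R} {p : R[X]}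
    (hp : ∀ k, p.coeff k ∈ 𝔞) : N.mkQ p ∈ 𝔞 • (⊤ : Submodule R (R[X] ⧸ N)) := by
  rw [p.as_sum_range, map_sum]
  refine Submodule.sum_mem _ fun i _ => ?_
  rw [← smul_X_eq_monomial, map_smul]
  exact Submodule.smul_mem_smul (hp i) Submodule.mem_top

theorem IsJacobsonPair.leftCoprime_of_map {K : TwoSidedIdeal R} (hK : IsJacobsonPair K)
    {G H : R[X]} (hG : G.Monic)
    (h : LeftCoprime (G.map K.ringCon.mk') (H.map K.ringCon.mk')) : LeftCoprime G H := by
  obtain ⟨a, b, hab⟩ := h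
  obtain ⟨a, rfl⟩ := map_surjective _ K.ringCon.mk'_surjective a
  obtain ⟨b, rfl⟩ := map_surjective _ K.ringCon.mk'_surjective b
  set L : Ideal R[X] := Ideal.span {G, H}
  have combination_mem : a * G + b * H ∈ L := Ideal.mem_span_pair.2 ⟨a, b, rfl⟩
  have top_le : (⊤ : Submodule R (R[X] ⧸ L.restrictScalars R)) ≤ Ring.jacobson R • ⊤ := by
    rintro y -
    obtain ⟨p, rfl⟩ := (L.restrictScalars R).mkQ_surjective y
    have mkQ_eq : (L.restrictScalars R).mkQ p =
        (L.restrictScalars R).mkQ (p * (1 - (a * G + b * H))) := by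
      rw [← sub_eq_zero, ← map_sub, mul_sub, mul_one, sub_sub_cancel, Submodule.mkQ_apply,
        Submodule.Quotient.mk_eq_zero]
      exact L.mul_mem_left p combination_mem
    rw [mkQ_eq]
    refine mkQ_mem_smul_top_of_forall_coeff_mem _ fun k => hK.mem_jacobson ?_
    rw [← ringCon_mk'_eq_zero_iff_s11, ← coeff_map]
    simp [hab]
  have top_eq_bot := (fg_top_quotient_restrictScalars hG
    (Ideal.subset_span (Set.mem_insert G {H}))).eq_bot_of_le_jacobson_smul top_le
  have one_mem : (1 : R[X]) ∈ L.restrictScalars R := by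
    rw [← (L.restrictScalars R).ker_mkQ, LinearMap.mem_ker, ← Submodule.mem_bot R, ← top_eq_bot]
    exact Submodule.mem_top
  exact Ideal.mem_span_pair.1 one_mem

end LeftCoprime

section UniqueFactorization

variable {R : Type*} [Ring R]

theorem eq_zero_of_degree_mul_monic_lt {p q : R[X]} (hq : q.Monic)
    (h : (p * q).degree < q.degree) : p = 0 := by
  by_contra hp
  rw [hq.degree_mul] at h
  exact h.not_ge (le_add_of_nonneg_left (zero_le_degree_iff.2 hp))

theorem eq_and_eq_of_mul_eq_mul_of_commute_sub {G1 G2 H1 H2 : R[X]} (hG1 : G1.Monic)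
    (hH1 : H1.Monic) (hdeg : G1.natDegree = H1.natDegree) (hmul : G1 * G2 = H1 * H2)
    (hcop : LeftCoprime G1 H2) (hcomm1 : ∀ p, Commute p (G1 - H1))
    (hcomm2 : ∀ p, Commute p (G2 - H2)) : G1 = H1 ∧ G2 = H2 := by
  nontriviality R
  obtain ⟨a, b, hab⟩ := hcop
  have cross : (G1 - H1) * H2 = -((G2 - H2) * G1) := by
    rw [← (hcomm2 G1).eq, mul_sub, sub_mul, hmul]
    abel
  have sub_eq_mul : G1 - H1 = ((G1 - H1) * a - b * (G2 - H2)) * G1 := by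
    calc G1 - H1 = (G1 - H1) * a * G1 + (G1 - H1) * b * H2 := by
          rw [mul_assoc, mul_assoc, ← mul_add, hab, mul_one]
      _ = (G1 - H1) * a * G1 + b * ((G1 - H1) * H2) := by rw [← (hcomm1 b).eq, mul_assoc b]
      _ = ((G1 - H1) * a - b * (G2 - H2)) * G1 := by rw [cross]; noncomm_ring
  have degree_sub_lt : (G1 - H1).degree < G1.degree := by
    refine degree_sub_lt_left ?_ hG1.ne_zero (hG1.leadingCoeff.trans hH1.leadingCoeff.symm)
    rw [degree_eq_natDegree hG1.ne_zero, degree_eq_natDegree hH1.ne_zero, hdeg]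
  have sub_eq_zero₁ : G1 - H1 = 0 := by
    rw [sub_eq_mul] at degree_sub_lt
    rw [sub_eq_mul, eq_zero_of_degree_mul_monic_lt hG1 degree_sub_lt, zero_mul]
  have sub_eq_zero₂ : G2 - H2 = 0 := by
    rwa [sub_eq_zero₁, zero_mul, eq_comm, neg_eq_zero, hG1.mul_left_eq_zero_iff] at cross
  exact ⟨sub_eq_zero.1 sub_eq_zero₁, sub_eq_zero.1 sub_eq_zero₂⟩

theorem commute_of_forall_coeff_commute {p q : R[X]}
    (h : ∀ i j, Commute (p.coeff i) (q.coeff j)) : Commute p q := by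
  ext k
  rw [coeff_mul, coeff_mul, ← Finset.Nat.sum_antidiagonal_swap]
  exact Finset.sum_congr rfl fun x _ => (h x.2 x.1).eq

variable {K : TwoSidedIdeal R}

theorem commute_map_sub_map_of_map_eq {n : ℕ} {P Q : R[X]}
    (h : P.map (commFilt K n).ringCon.mk' = Q.map (commFilt K n).ringCon.mk')
    (p : (commFilt K (n + 1)).ringCon.Quotient[X]) :
    Commute p (P.map (commFilt K (n + 1)).ringCon.mk' -
      Q.map (commFilt K (n + 1)).ringCon.mk') := by
  rw [map_ringCon_mk'_eq_iff] at h
  refine commute_of_forall_coeff_commute fun i j => ?_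
  obtain ⟨a, ha⟩ := (commFilt K (n + 1)).ringCon.mk'_surjective (p.coeff i)
  rw [← ha, coeff_sub, coeff_map, coeff_map, ← map_sub, commute_iff_eq, ← map_mul, ← map_mul,
    ringCon_mk'_eq_iff]
  exact TwoSidedIdeal.subset_span ⟨a, _, h j, rfl⟩

theorem map_commFilt_eq_map_of_mul_eq_mul {G1 G2 H1 H2 : R[X]} (hG1 : G1.Monic)
    (hH1 : H1.Monic) (hdeg : G1.natDegree = H1.natDegree) (hmul : G1 * G2 = H1 * H2)
    (hcop : LeftCoprime G1 H2) (h1 : G1.map K.ringCon.mk' = H1.map K.ringCon.mk')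
    (h2 : G2.map K.ringCon.mk' = H2.map K.ringCon.mk') (n : ℕ) :
    G1.map (commFilt K n).ringCon.mk' = H1.map (commFilt K n).ringCon.mk' ∧
      G2.map (commFilt K n).ringCon.mk' = H2.map (commFilt K n).ringCon.mk' := by
  induction n with
  | zero => exact ⟨h1, h2⟩
  | succ n ih =>
    rcases subsingleton_or_nontrivial (commFilt K (n + 1)).ringCon.Quotient with _ | _
    · exact ⟨Subsingleton.elim _ _, Subsingleton.elim _ _⟩
    refine eq_and_eq_of_mul_eq_mul_of_commute_sub (hG1.map _) (hH1.map _) ?_ ?_ (hcop.map _)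
      (commute_map_sub_map_of_map_eq ih.1) (commute_map_sub_map_of_map_eq ih.2)
    · rw [hG1.natDegree_map, hH1.natDegree_map, hdeg]
    · rw [← Polynomial.map_mul, hmul, Polynomial.map_mul]

theorem IsPerfectPair.eq_of_forall_map_commFilt_eq (hK : IsPerfectPair K) {P Q : R[X]}
    (h : ∀ n, P.map (commFilt K n).ringCon.mk' = Q.map (commFilt K n).ringCon.mk') : P = Q := by
  ext k
  exact sub_eq_zero.1 (hK _ fun n => (map_ringCon_mk'_eq_iff _).1 (h n) k)

theorem IsPerfectPair.eq_and_eq_of_mul_eq_mul (hK : IsPerfectPair K) (hKJ : IsJacobsonPair K)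
    {G1 G2 H1 H2 : R[X]} (hG1 : G1.Monic) (hH1 : H1.Monic) (hmul : G1 * G2 = H1 * H2)
    (hcop : LeftCoprime (G1.map K.ringCon.mk') (G2.map K.ringCon.mk'))
    (h1 : G1.map K.ringCon.mk' = H1.map K.ringCon.mk')
    (h2 : G2.map K.ringCon.mk' = H2.map K.ringCon.mk') : G1 = H1 ∧ G2 = H2 := by
  nontriviality R
  have := hKJ.nontrivial_quotient_s11
  have hdeg : G1.natDegree = H1.natDegree := by
    rw [← hG1.natDegree_map K.ringCon.mk', h1, hH1.natDegree_map]
  have hcop' : LeftCoprime G1 H2 := hKJ.leftCoprime_of_map hG1 (h2 ▸ hcop)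
  have hmod := map_commFilt_eq_map_of_mul_eq_mul hG1 hH1 hdeg hmul hcop' h1 h2
  exact ⟨hK.eq_of_forall_map_commFilt_eq fun n => (hmod n).1,
    hK.eq_of_forall_map_commFilt_eq fun n => (hmod n).2⟩

end UniqueFactorization

section DivisionClosure

/-- Formal rational expressions in noncommuting variables indexed by `α`. They form a type in the
universe of `α`, which bounds the size of division closures. -/
inductive RationalExpr (α : Type u) : Type u
  | var (a : α)
  | one
  | add (s t : RationalExpr α)
  | mul (s t : RationalExpr α)
  | neg (t : RationalExpr α)
  | inv (t : RationalExpr α)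

variable {α : Type u} {R : Type*} [Ring R]

/-- The value of a rational expression in a ring; a nonunit is inverted to `0`. -/
noncomputable def RationalExpr.eval (v : α → R) : RationalExpr α → R
  | var a => v a
  | one => 1
  | add s t => s.eval v + t.eval v
  | mul s t => s.eval v * t.eval v
  | neg t => -t.eval v
  | inv t => Ring.inverse (t.eval v)

/-- The division closure of the family `v`: the smallest subring of `R` that contains its members
and the inverse of each of its elements that is a unit of `R`. -/
def divisionClosure (v : α → R) : Subring R where
  carrier := Set.range (RationalExpr.eval v)
  one_mem' := ⟨.one, rfl⟩
  zero_mem' := ⟨.add .one (.neg .one), add_neg_cancel 1⟩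
  add_mem' := by
    rintro _ _ ⟨s, rfl⟩ ⟨t, rfl⟩
    exact ⟨.add s t, rfl⟩
  mul_mem' := by
    rintro _ _ ⟨s, rfl⟩ ⟨t, rfl⟩
    exact ⟨.mul s t, rfl⟩
  neg_mem' := by
    rintro _ ⟨t, rfl⟩
    exact ⟨.neg t, rfl⟩

instance (v : α → R) : Small.{u} (divisionClosure v) :=
  inferInstanceAs (Small.{u} (Set.range (RationalExpr.eval v)))

/-- A copy of `divisionClosure v` in the universe of the index type of `v`. -/
abbrev DivisionClosure (v : α → R) : Type u := Shrink.{u} (divisionClosure v)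

namespace DivisionClosure

variable {v : α → R}

/-- The inclusion of the division closure of `v` into the ambient ring. -/
noncomputable def incl (v : α → R) : DivisionClosure v →+* R :=
  (divisionClosure v).subtype.comp (Shrink.ringEquiv (divisionClosure v)).toRingHom

/-- The value of a rational expression, as an element of the division closure. -/
noncomputable def ofExpr (v : α → R) (t : RationalExpr α) : DivisionClosure v :=
  (Shrink.ringEquiv (divisionClosure v)).symm ⟨t.eval v, t, rfl⟩

theorem incl_injective : Function.Injective (incl v) :=
  Subtype.val_injective.comp (Shrink.ringEquiv (divisionClosure v)).injective

theorem incl_ofExpr (t : RationalExpr α) : incl v (ofExpr v t) = t.eval v :=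
  congrArg Subtype.val ((Shrink.ringEquiv (divisionClosure v)).apply_symm_apply _)

theorem ofExpr_surjective : Function.Surjective (ofExpr v) := fun x => by
  obtain ⟨t, ht⟩ := (Shrink.ringEquiv (divisionClosure v) x).2
  exact ⟨t, incl_injective ((incl_ofExpr t).trans ht)⟩

theorem ofExpr_inv_mul_cancel {t : RationalExpr α} (ht : IsUnit (t.eval v)) :
    ofExpr v t.inv * ofExpr v t = 1 := by
  apply incl_injective
  rw [map_mul, incl_ofExpr, incl_ofExpr, map_one]
  exact Ring.inverse_mul_cancel _ ht

theorem mul_ofExpr_inv_cancel {t : RationalExpr α} (ht : IsUnit (t.eval v)) :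
    ofExpr v t * ofExpr v t.inv = 1 := by
  apply incl_injective
  rw [map_mul, incl_ofExpr, incl_ofExpr, map_one]
  exact Ring.mul_inverse_cancel _ ht

theorem isUnit_of_isUnit_incl {x : DivisionClosure v} (hx : IsUnit (incl v x)) : IsUnit x := by
  obtain ⟨t, rfl⟩ := ofExpr_surjective x
  rw [incl_ofExpr] at hx
  exact ⟨⟨_, _, mul_ofExpr_inv_cancel hx, ofExpr_inv_mul_cancel hx⟩, rfl⟩

theorem ringHom_ext {S : Type*} [Ring S] {ψ ψ' : DivisionClosure v →+* S}
    (h : ∀ a, ψ (ofExpr v (.var a)) = ψ' (ofExpr v (.var a))) : ψ = ψ' := by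
  ext x
  obtain ⟨t, rfl⟩ := ofExpr_surjective x
  induction t with
  | var a => exact h a
  | one =>
    have : ofExpr v .one = 1 := incl_injective (by rw [incl_ofExpr, map_one]; rfl)
    rw [this, map_one, map_one]
  | add s t hs ht =>
    have : ofExpr v (s.add t) = ofExpr v s + ofExpr v t :=
      incl_injective (by simp only [map_add, incl_ofExpr]; rfl)
    rw [this, map_add, map_add, hs, ht]
  | mul s t hs ht =>
    have : ofExpr v (s.mul t) = ofExpr v s * ofExpr v t :=
      incl_injective (by simp only [map_mul, incl_ofExpr]; rfl)
    rw [this, map_mul, map_mul, hs, ht]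
  | neg t ht =>
    have : ofExpr v t.neg = -ofExpr v t :=
      incl_injective (by simp only [map_neg, incl_ofExpr]; rfl)
    rw [this, map_neg, map_neg, ht]
  | inv t ht =>
    by_cases hunit : IsUnit (t.eval v)
    · refine left_inv_eq_right_inv (a := ψ (ofExpr v t)) ?_ ?_
      · rw [← map_mul, ofExpr_inv_mul_cancel hunit, map_one]
      · rw [ht, ← map_mul, mul_ofExpr_inv_cancel hunit, map_one]
    · have : ofExpr v t.inv = 0 := incl_injective <| by
        rw [incl_ofExpr, map_zero]
        exact Ring.inverse_non_unit _ hunit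
      rw [this, map_zero, map_zero]

end DivisionClosure

end DivisionClosure

section TruncatedSeries

variable {R : Type*} [Semiring R] {c : ℕ → R} {n : ℕ}

theorem coeff_trunc_mk (hc : ∀ k, n < k → c k = 0) (k : ℕ) :
    (PowerSeries.trunc (n + 1) (PowerSeries.mk c)).coeff k = c k := by
  rw [PowerSeries.coeff_trunc, PowerSeries.coeff_mk, ite_eq_left_iff]
  exact fun hk => (hc k (by omega)).symm

theorem monic_trunc_mk (hc : c n = 1) :
    (PowerSeries.trunc (n + 1) (PowerSeries.mk c)).Monic := by
  refine monic_of_natDegree_le_of_coeff_eq_one n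
    (Nat.lt_succ_iff.1 (PowerSeries.natDegree_trunc_lt _ n)) ?_
  rw [PowerSeries.coeff_trunc, if_pos n.lt_succ_self, PowerSeries.coeff_mk, hc]

end TruncatedSeries

/-- A perfect Jacobson pair under `(A, I)` together with a factorization of the image of `F` into
monic factors that reduce to the images of `f1` and `f2`. The map induced on quotients is not part
of the data: it is `isPairHom.quotientMap`. -/
structure FactorizationLift {A : Type u} [Ring A] (I : TwoSidedIdeal A) (F : A[X])
    (f1 f2 : I.ringCon.Quotient[X]) : Type (u + 1) where
  carrier : Type u
  [ring : Ring carrier]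
  ideal : TwoSidedIdeal carrier
  hom : A →+* carrier
  isPairHom : IsPairHom I ideal hom
  isPerfectPair : IsPerfectPair ideal
  isJacobsonPair : IsJacobsonPair ideal
  fst : carrier[X]
  snd : carrier[X]
  monic_fst : fst.Monic
  monic_snd : snd.Monic
  map_hom : F.map hom = fst * snd
  map_fst : fst.map ideal.ringCon.mk' = f1.map isPairHom.quotientMap
  map_snd : snd.map ideal.ringCon.mk' = f2.map isPairHom.quotientMap

namespace FactorizationLift

attribute [instance] FactorizationLift.ring

variable {A : Type u} [Ring A] {I : TwoSidedIdeal A} {F : A[X]} {f1 f2 : I.ringCon.Quotient[X]}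

theorem map_fst_eq_and_map_snd_eq (hcop : LeftCoprime f1 f2) {E D : FactorizationLift I F f1 f2}
    {ψ : E.carrier →+* D.carrier} (hψ : IsPairHom E.ideal D.ideal ψ)
    (hcomp : D.hom = ψ.comp E.hom) : E.fst.map ψ = D.fst ∧ E.snd.map ψ = D.snd := by
  have hquot : D.isPairHom.quotientMap = hψ.quotientMap.comp E.isPairHom.quotientMap := by
    rw [← hψ.quotientMap_comp E.isPairHom]
    exact IsPairHom.eq_quotientMap _ (by rw [← hcomp]; rfl)
  have red {G : E.carrier[X]} {f : I.ringCon.Quotient[X]}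
      (h : G.map E.ideal.ringCon.mk' = f.map E.isPairHom.quotientMap) :
      (G.map ψ).map D.ideal.ringCon.mk' = f.map D.isPairHom.quotientMap := by
    rw [map_map, ← hψ.quotientMap_comp_mk', ← map_map, h, map_map, hquot]
  refine D.isPerfectPair.eq_and_eq_of_mul_eq_mul D.isJacobsonPair (E.monic_fst.map ψ) D.monic_fst
    ?_ ?_ ((red E.map_fst).trans D.map_fst.symm) ((red E.map_snd).trans D.map_snd.symm)
  · rw [← Polynomial.map_mul, ← E.map_hom, map_map, ← hcomp, D.map_hom]
  · rw [red E.map_fst, red E.map_snd]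
    exact hcop.map _

/-- The pair `(A / I, 0)` with the factorization `f1 * f2` itself. -/
def quotient (hf1 : f1.Monic) (hf2 : f2.Monic) (hfact : F.map I.ringCon.mk' = f1 * f2) :
    FactorizationLift I F f1 f2 where
  carrier := I.ringCon.Quotient
  ideal := ⊥
  hom := I.ringCon.mk'
  isPairHom a := by rw [TwoSidedIdeal.mem_bot, ringCon_mk'_eq_zero_iff_s11]
  isPerfectPair x hx := (TwoSidedIdeal.mem_bot _).1 (hx 0)
  isJacobsonPair a ha := by
    rw [(TwoSidedIdeal.mem_bot _).1 ha, add_zero]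
    exact isUnit_one
  fst := f1
  snd := f2
  monic_fst := hf1
  monic_snd := hf2
  map_hom := hfact
  map_fst := congrArg f1.map (IsPairHom.eq_quotientMap _ rfl)
  map_snd := congrArg f2.map (IsPairHom.eq_quotientMap _ rfl)

/-- The images of the elements of `A` and the coefficients of the two factors, as elements of the
product of all factorization lifts. -/
def generators (I : TwoSidedIdeal A) (F : A[X]) (f1 f2 : I.ringCon.Quotient[X]) :
    A ⊕ ℕ ⊕ ℕ → ∀ D : FactorizationLift I F f1 f2, D.carrier
  | .inl a, D => D.hom a
  | .inr (.inl k), D => D.fst.coeff k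
  | .inr (.inr k), D => D.snd.coeff k

/-- The ring of the universal factorization lift. -/
abbrev UniversalRing (I : TwoSidedIdeal A) (F : A[X]) (f1 f2 : I.ringCon.Quotient[X]) : Type u :=
  DivisionClosure (generators I F f1 f2)

/-- The projection of the universal ring to a given factorization lift. -/
noncomputable def eval (D : FactorizationLift I F f1 f2) : UniversalRing I F f1 f2 →+* D.carrier :=
  (Pi.evalRingHom _ D).comp (DivisionClosure.incl _)

/-- The generators of the universal ring, as elements of it. -/
noncomputable def gen (I : TwoSidedIdeal A) (F : A[X]) (f1 f2 : I.ringCon.Quotient[X])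
    (s : A ⊕ ℕ ⊕ ℕ) : UniversalRing I F f1 f2 :=
  DivisionClosure.ofExpr _ (.var s)

theorem eval_gen (D : FactorizationLift I F f1 f2) (s : A ⊕ ℕ ⊕ ℕ) :
    D.eval (gen I F f1 f2 s) = generators I F f1 f2 s D :=
  congrFun (DivisionClosure.incl_ofExpr (.var s)) D

theorem eq_of_forall_eval_eq {x y : UniversalRing I F f1 f2}
    (h : ∀ D : FactorizationLift I F f1 f2, D.eval x = D.eval y) : x = y :=
  DivisionClosure.incl_injective (funext h)

theorem isUnit_of_forall_isUnit_eval {x : UniversalRing I F f1 f2}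
    (h : ∀ D : FactorizationLift I F f1 f2, IsUnit (D.eval x)) : IsUnit x :=
  DivisionClosure.isUnit_of_isUnit_incl (Pi.isUnit_iff.2 h)

/-- The structure map of the universal factorization lift. -/
noncomputable def universalHom (I : TwoSidedIdeal A) (F : A[X]) (f1 f2 : I.ringCon.Quotient[X]) :
    A →+* UniversalRing I F f1 f2 where
  toFun a := gen I F f1 f2 (.inl a)
  map_one' := eq_of_forall_eval_eq fun D => by
    simp only [eval_gen, generators, map_one]
  map_mul' a b := eq_of_forall_eval_eq fun D => by
    simp only [eval_gen, generators, map_mul]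
  map_zero' := eq_of_forall_eval_eq fun D => by
    simp only [eval_gen, generators, map_zero]
  map_add' a b := eq_of_forall_eval_eq fun D => by
    simp only [eval_gen, generators, map_add]

theorem eval_comp_universalHom (D : FactorizationLift I F f1 f2) :
    D.eval.comp (universalHom I F f1 f2) = D.hom :=
  RingHom.ext fun a => D.eval_gen (.inl a)

/-- The first factor of the universal factorization lift. Truncation loses nothing, since the first
factor of every lift has degree at most `f1.natDegree`. -/
noncomputable def universalFst (I : TwoSidedIdeal A) (F : A[X])
    (f1 f2 : I.ringCon.Quotient[X]) : (UniversalRing I F f1 f2)[X] :=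
  PowerSeries.trunc (f1.natDegree + 1) (PowerSeries.mk fun k => gen I F f1 f2 (.inr (.inl k)))

/-- The second factor of the universal factorization lift, constructed like the first. -/
noncomputable def universalSnd (I : TwoSidedIdeal A) (F : A[X])
    (f1 f2 : I.ringCon.Quotient[X]) : (UniversalRing I F f1 f2)[X] :=
  PowerSeries.trunc (f2.natDegree + 1) (PowerSeries.mk fun k => gen I F f1 f2 (.inr (.inr k)))

theorem coeff_universalFst (k : ℕ) :
    (universalFst I F f1 f2).coeff k = gen I F f1 f2 (.inr (.inl k)) := by
  refine coeff_trunc_mk (fun k hk => eq_of_forall_eval_eq fun D => ?_) k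
  rw [eval_gen, map_zero]
  exact coeff_eq_zero_of_natDegree_lt
    ((D.isJacobsonPair.natDegree_le_of_map_eq_map D.monic_fst D.map_fst).trans_lt hk)

theorem coeff_universalSnd (k : ℕ) :
    (universalSnd I F f1 f2).coeff k = gen I F f1 f2 (.inr (.inr k)) := by
  refine coeff_trunc_mk (fun k hk => eq_of_forall_eval_eq fun D => ?_) k
  rw [eval_gen, map_zero]
  exact coeff_eq_zero_of_natDegree_lt
    ((D.isJacobsonPair.natDegree_le_of_map_eq_map D.monic_snd D.map_snd).trans_lt hk)

theorem monic_universalFst (hf1 : f1.Monic) : (universalFst I F f1 f2).Monic := by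
  refine monic_trunc_mk (eq_of_forall_eval_eq fun D => ?_)
  rw [eval_gen, map_one]
  exact D.isJacobsonPair.coeff_natDegree_eq_one_of_map_eq_map D.monic_fst hf1 D.map_fst

theorem monic_universalSnd (hf2 : f2.Monic) : (universalSnd I F f1 f2).Monic := by
  refine monic_trunc_mk (eq_of_forall_eval_eq fun D => ?_)
  rw [eval_gen, map_one]
  exact D.isJacobsonPair.coeff_natDegree_eq_one_of_map_eq_map D.monic_snd hf2 D.map_snd

theorem map_eval_universalFst (D : FactorizationLift I F f1 f2) :
    (universalFst I F f1 f2).map D.eval = D.fst := by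
  ext k
  rw [coeff_map, coeff_universalFst, eval_gen]
  rfl

theorem map_eval_universalSnd (D : FactorizationLift I F f1 f2) :
    (universalSnd I F f1 f2).map D.eval = D.snd := by
  ext k
  rw [coeff_map, coeff_universalSnd, eval_gen]
  rfl

theorem map_universalHom :
    F.map (universalHom I F f1 f2) = universalFst I F f1 f2 * universalSnd I F f1 f2 := by
  refine Polynomial.ext fun k => eq_of_forall_eval_eq fun D => ?_
  rw [← coeff_map D.eval, ← coeff_map D.eval, Polynomial.map_mul, map_eval_universalFst,
    map_eval_universalSnd, map_map, eval_comp_universalHom, D.map_hom]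

section Universal

variable (hf1 : f1.Monic) (hf2 : f2.Monic) (hfact : F.map I.ringCon.mk' = f1 * f2)

/-- The reduction of the universal ring to `A / I`. -/
noncomputable def reduction : UniversalRing I F f1 f2 →+* I.ringCon.Quotient :=
  (quotient hf1 hf2 hfact).eval

theorem mk'_comp_eval (D : FactorizationLift I F f1 f2) :
    D.ideal.ringCon.mk'.comp D.eval =
      D.isPairHom.quotientMap.comp (reduction hf1 hf2 hfact) := by
  refine DivisionClosure.ringHom_ext fun s => ?_
  change D.ideal.ringCon.mk' (D.eval (gen I F f1 f2 s)) =
    D.isPairHom.quotientMap ((quotient hf1 hf2 hfact).eval (gen I F f1 f2 s))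
  rw [eval_gen, eval_gen]
  rcases s with a | k | k
  · rfl
  · exact (coeff_map _ k).symm.trans ((congrArg (coeff · k) D.map_fst).trans (coeff_map _ k))
  · exact (coeff_map _ k).symm.trans ((congrArg (coeff · k) D.map_snd).trans (coeff_map _ k))

theorem isPairHom_eval (D : FactorizationLift I F f1 f2) :
    IsPairHom (TwoSidedIdeal.ker (reduction hf1 hf2 hfact)) D.ideal D.eval := fun x => by
  rw [TwoSidedIdeal.mem_ker, ← D.isPairHom.quotientMap_eq_zero_iff, ← ringCon_mk'_eq_zero_iff_s11]
  exact Eq.congr_left (RingHom.congr_fun (mk'_comp_eval hf1 hf2 hfact D) x)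

theorem isPairHom_universalHom :
    IsPairHom I (TwoSidedIdeal.ker (reduction hf1 hf2 hfact)) (universalHom I F f1 f2) :=
  fun a => by
    rw [TwoSidedIdeal.mem_ker, ← ringCon_mk'_eq_zero_iff_s11]
    exact Eq.congr_left (RingHom.congr_fun (eval_comp_universalHom (quotient hf1 hf2 hfact)) a)

theorem map_mk'_eq_map_quotientMap_of_map_reduction {P : (UniversalRing I F f1 f2)[X]}
    {f : I.ringCon.Quotient[X]} (h : P.map (reduction hf1 hf2 hfact) = f) :
    P.map (TwoSidedIdeal.ker (reduction hf1 hf2 hfact)).ringCon.mk' =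
      f.map (isPairHom_universalHom hf1 hf2 hfact).quotientMap := by
  ext k
  obtain ⟨a, ha⟩ := I.ringCon.mk'_surjective (f.coeff k)
  rw [coeff_map, coeff_map, ← ha, IsPairHom.quotientMap_mk', ringCon_mk'_eq_iff,
    TwoSidedIdeal.mem_ker, map_sub, sub_eq_zero, ← coeff_map, h, ← ha]
  exact (RingHom.congr_fun (eval_comp_universalHom (quotient hf1 hf2 hfact)) a).symm

/-- The universal factorization lift. -/
noncomputable def universal : FactorizationLift I F f1 f2 where
  carrier := UniversalRing I F f1 f2
  ideal := TwoSidedIdeal.ker (reduction hf1 hf2 hfact)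
  hom := universalHom I F f1 f2
  isPairHom := isPairHom_universalHom hf1 hf2 hfact
  isPerfectPair x hx := eq_of_forall_eval_eq fun D => by
    rw [map_zero]
    exact D.isPerfectPair _ fun n => (isPairHom_eval hf1 hf2 hfact D).map_mem_commFilt n (hx n)
  isJacobsonPair x hx := isUnit_of_forall_isUnit_eval fun D => by
    rw [map_add, map_one]
    exact D.isJacobsonPair _ ((isPairHom_eval hf1 hf2 hfact D x).2 hx)
  fst := universalFst I F f1 f2
  snd := universalSnd I F f1 f2
  monic_fst := monic_universalFst hf1
  monic_snd := monic_universalSnd hf2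
  map_hom := map_universalHom
  map_fst := map_mk'_eq_map_quotientMap_of_map_reduction hf1 hf2 hfact (map_eval_universalFst _)
  map_snd := map_mk'_eq_map_quotientMap_of_map_reduction hf1 hf2 hfact (map_eval_universalSnd _)

theorem existsUnique_isPairHom_universal (hcop : LeftCoprime f1 f2)
    (D : FactorizationLift I F f1 f2) :
    ∃! ψ : (universal hf1 hf2 hfact).carrier →+* D.carrier,
      IsPairHom (universal hf1 hf2 hfact).ideal D.ideal ψ ∧
        D.hom = ψ.comp (universal hf1 hf2 hfact).hom := by
  refine ⟨D.eval, ⟨isPairHom_eval hf1 hf2 hfact D, D.eval_comp_universalHom.symm⟩, ?_⟩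
  rintro ψ ⟨hψ, hcomp⟩
  obtain ⟨hfst, hsnd⟩ := map_fst_eq_and_map_snd_eq hcop hψ hcomp
  refine DivisionClosure.ringHom_ext fun s => ?_
  change ψ (gen I F f1 f2 s) = D.eval (gen I F f1 f2 s)
  rw [eval_gen]
  rcases s with a | k | k
  · exact (RingHom.congr_fun hcomp a).symm
  · rw [← coeff_universalFst]
    exact (coeff_map ψ k).symm.trans (congrArg (coeff · k) hfst)
  · rw [← coeff_universalSnd]
    exact (coeff_map ψ k).symm.trans (congrArg (coeff · k) hsnd)

end Universal

end FactorizationLift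

theorem exists_universal_factorization_pair_general {A : Type u} [Ring A]
    (I : TwoSidedIdeal A) (F : A[X])
    (f1 f2 : (I.ringCon.Quotient)[X]) (hf1 : f1.Monic) (hf2 : f2.Monic)
    (hcop : LeftCoprime f1 f2)
    (hfact : F.map I.ringCon.mk' = f1 * f2) :
    ∃ (B : Type u) (_ : Ring B) (J : TwoSidedIdeal B) (Φ : A →+* B)
      (Φbar : I.ringCon.Quotient →+* J.ringCon.Quotient) (F1 F2 : B[X]),
      IsPairHom I J Φ ∧ IsPerfectPair J ∧ IsJacobsonPair J ∧
      Φbar.comp I.ringCon.mk' = J.ringCon.mk'.comp Φ ∧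
      F1.Monic ∧ F2.Monic ∧ F.map Φ = F1 * F2 ∧
      F1.map J.ringCon.mk' = f1.map Φbar ∧ F2.map J.ringCon.mk' = f2.map Φbar ∧
      ∀ (C : Type u) (_ : Ring C) (K : TwoSidedIdeal C) (φ : A →+* C)
        (φbar : I.ringCon.Quotient →+* K.ringCon.Quotient) (G1 G2 : C[X]),
        IsPairHom I K φ → IsPerfectPair K → IsJacobsonPair K →
        φbar.comp I.ringCon.mk' = K.ringCon.mk'.comp φ →
        G1.Monic → G2.Monic → F.map φ = G1 * G2 →
        G1.map K.ringCon.mk' = f1.map φbar → G2.map K.ringCon.mk' = f2.map φbar →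
        ∃! ψ : B →+* C, IsPairHom J K ψ ∧ φ = ψ.comp Φ := by
  let U := FactorizationLift.universal hf1 hf2 hfact
  refine ⟨U.carrier, U.ring, U.ideal, U.hom, U.isPairHom.quotientMap, U.fst, U.snd, U.isPairHom,
    U.isPerfectPair, U.isJacobsonPair, U.isPairHom.quotientMap_comp_mk', U.monic_fst, U.monic_snd,
    U.map_hom, U.map_fst, U.map_snd, ?_⟩
  intro C _ K φ φbar G1 G2 hφ hKperf hKjac hφbar hG1 hG2 hmul hred1 hred2
  obtain rfl := hφ.eq_quotientMap hφbar
  exact FactorizationLift.existsUnique_isPairHom_universal hf1 hf2 hfact hcop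
    ⟨C, K, φ, hφ, hKperf, hKjac, G1, G2, hG1, hG2, hmul, hred1, hred2⟩

/-- Proposition `factorizationN`: for a perfect pair `(A,I)`, a monic
`F ∈ A[x]` and a factorization `F̄ = f₁f₂` into left coprime monic polynomials over
`A/I`, there is a perfect Jacobson pair `(B,J)`, a morphism of pairs `Φ : (A,I) → (B,J)`
and a lifted factorization `Φ(F) = F₁F₂` which is universal among such data. -/
theorem exists_universal_factorization_pair {A : Type u} [Ring A]
    (I : TwoSidedIdeal A) (hperf : IsPerfectPair I)
    (F : A[X]) (hF : F.Monic)
    (f1 f2 : (I.ringCon.Quotient)[X]) (hf1 : f1.Monic) (hf2 : f2.Monic)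
    (hcop : LeftCoprime f1 f2)
    (hfact : F.map I.ringCon.mk' = f1 * f2) :
    ∃ (B : Type u) (_ : Ring B) (J : TwoSidedIdeal B) (Φ : A →+* B)
      (Φbar : I.ringCon.Quotient →+* J.ringCon.Quotient) (F1 F2 : B[X]),
      IsPairHom I J Φ ∧ IsPerfectPair J ∧ IsJacobsonPair J ∧
      Φbar.comp I.ringCon.mk' = J.ringCon.mk'.comp Φ ∧
      F1.Monic ∧ F2.Monic ∧ F.map Φ = F1 * F2 ∧
      F1.map J.ringCon.mk' = f1.map Φbar ∧ F2.map J.ringCon.mk' = f2.map Φbar ∧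
      ∀ (C : Type u) (_ : Ring C) (K : TwoSidedIdeal C) (φ : A →+* C)
        (φbar : I.ringCon.Quotient →+* K.ringCon.Quotient) (G1 G2 : C[X]),
        IsPairHom I K φ → IsPerfectPair K → IsJacobsonPair K →
        φbar.comp I.ringCon.mk' = K.ringCon.mk'.comp φ →
        G1.Monic → G2.Monic → F.map φ = G1 * G2 →
        G1.map K.ringCon.mk' = f1.map φbar → G2.map K.ringCon.mk' = f2.map φbar →
        ∃! ψ : B →+* C, IsPairHom J K ψ ∧ φ = ψ.comp Φ := by
  exact exists_universal_factorization_pair_general I F f1 f2 hf1 hf2 hcop hfact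
end

section
/- Let (A,I) be a commutative pair (A a commutative ring), and let (H,Jh) together with φ:(A,I)→(H,Jh) be a left Henselization of (A,I) (note that a commutative pair is perfect). Then the two-sided ideal J of H generated by all commutators [H,H] = {ab−ba : a,b ∈ H} is contained in Jh. -/
open Polynomial

universe u

/-!
The zero ideal of any ring is perfect and left Henselian, so the universal property extends the
quotient map `A → A/I`, viewed as a morphism of pairs `(A, I) → (A/I, 0)`, to a morphism
`(H, Jh) → (A/I, 0)`. Being a morphism of pairs, it has kernel exactly `Jh`; and since its target
`A/I` is commutative, it kills every commutator of `H`.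
-/

section

variable {A B : Type*} [Ring A] [Ring B]

theorem isPairHom_bot_iff {I : TwoSidedIdeal A} {φ : A →+* B} :
    IsPairHom I ⊥ φ ↔ TwoSidedIdeal.ker φ = I := by
  simp only [IsPairHom, SetLike.ext_iff, TwoSidedIdeal.mem_ker, TwoSidedIdeal.mem_bot]

theorem isPerfectPair_bot : IsPerfectPair (⊥ : TwoSidedIdeal A) :=
  fun _ hx ↦ (TwoSidedIdeal.mem_bot A).1 (hx 0)

theorem isJacobsonPair_bot : IsJacobsonPair (⊥ : TwoSidedIdeal A) := by
  intro a ha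
  obtain rfl := (TwoSidedIdeal.mem_bot A).1 ha
  simp only [add_zero, isUnit_one]

theorem isLeftHenselianPair_bot : IsLeftHenselianPair (⊥ : TwoSidedIdeal A) := by
  have mk_injective : Function.Injective (⊥ : TwoSidedIdeal A).ringCon.mk' :=
    (TwoSidedIdeal.ker_eq_bot _).1 (TwoSidedIdeal.ker_ringCon_mk' ⊥)
  have map_injective := Polynomial.map_injective _ mk_injective
  have map_surjective :=
    Polynomial.map_surjective _ (RingCon.mk'_surjective (⊥ : TwoSidedIdeal A).ringCon)
  refine ⟨isJacobsonPair_bot, fun F _ f₁ f₂ hf₁ hf₂ _ hF ↦ ?_⟩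
  obtain ⟨F₁, rfl⟩ := map_surjective f₁
  obtain ⟨F₂, rfl⟩ := map_surjective f₂
  have F_eq : F = F₁ * F₂ := map_injective (by rw [hF, Polynomial.map_mul])
  refine ⟨(F₁, F₂), ⟨monic_of_injective mk_injective hf₁, monic_of_injective mk_injective hf₂,
    F_eq, rfl, rfl⟩, ?_⟩
  rintro ⟨G₁, G₂⟩ ⟨_, _, _, hG₁, hG₂⟩
  exact Prod.ext (map_injective hG₁) (map_injective hG₂)

theorem span_commutators_le_ker_iff {φ : A →+* B} :
    TwoSidedIdeal.span {x : A | ∃ a b : A, x = a * b - b * a} ≤ TwoSidedIdeal.ker φ ↔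
      ∀ a b : A, Commute (φ a) (φ b) := by
  have commutator_mem_iff (a b : A) :
      a * b - b * a ∈ TwoSidedIdeal.ker φ ↔ Commute (φ a) (φ b) := by
    rw [TwoSidedIdeal.mem_ker, map_sub, map_mul, map_mul, sub_eq_zero, commute_iff_eq]
  rw [TwoSidedIdeal.span_le]
  constructor
  · exact fun h a b ↦ (commutator_mem_iff a b).1 (h ⟨a, b, rfl⟩)
  · rintro h _ ⟨a, b, rfl⟩
    exact (commutator_mem_iff a b).2 (h a b)

end

theorem IsLeftHenselization.exists_lift_of_ker_eq {A H B : Type u} [Ring A] [Ring H] [Ring B]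
    {I : TwoSidedIdeal A} {J : TwoSidedIdeal H} {φ : A →+* H} (hH : IsLeftHenselization I J φ)
    {π : A →+* B} (hπ : TwoSidedIdeal.ker π = I) :
    ∃ ψ : H →+* B, TwoSidedIdeal.ker ψ = J ∧ π = ψ.comp φ := by
  obtain ⟨_, _, _, lift⟩ := hH
  obtain ⟨ψ, ⟨hψ, π_eq⟩, _⟩ :=
    lift B inferInstance ⊥ π (isPairHom_bot_iff.2 hπ) isPerfectPair_bot isLeftHenselianPair_bot
  exact ⟨ψ, isPairHom_bot_iff.1 hψ, π_eq⟩

theorem commutator_ideal_le_of_commutative_general {A H : Type u} [Ring A] [Ring H]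
    {I : TwoSidedIdeal A} {Jh : TwoSidedIdeal H} {φ : A →+* H}
    (hH : IsLeftHenselization I Jh φ)
    (hI : TwoSidedIdeal.span {x : A | ∃ a b : A, x = a * b - b * a} ≤ I) :
    TwoSidedIdeal.span {x : H | ∃ a b : H, x = a * b - b * a} ≤ Jh := by
  have ker_mk : TwoSidedIdeal.ker I.ringCon.mk' = I := I.ker_ringCon_mk'
  have quotient_commute : ∀ x y : I.ringCon.Quotient, Commute x y :=
    (RingCon.mk'_surjective I.ringCon).forall₂.2
      (span_commutators_le_ker_iff.1 (hI.trans_eq ker_mk.symm))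
  obtain ⟨ψ, rfl, _⟩ := hH.exists_lift_of_ker_eq ker_mk
  exact span_commutators_le_ker_iff.2 fun a b ↦ quotient_commute (ψ a) (ψ b)

/-- if `(A,I)` is a commutative pair and `(H,Jh)` its left Henselization,
then the two-sided ideal of `H` generated by all commutators is contained in `Jh`. -/
theorem commutator_ideal_le_of_commutative {A H : Type u} [CommRing A] [Ring H]
    (I : TwoSidedIdeal A) (Jh : TwoSidedIdeal H) (φ : A →+* H)
    (hH : IsLeftHenselization I Jh φ) :
    TwoSidedIdeal.span {x : H | ∃ a b : H, x = a * b - b * a} ≤ Jh := by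
  refine commutator_ideal_le_of_commutative_general hH ?_
  exact I.ker_ringCon_mk' ▸ span_commutators_le_ker_iff.2 fun a b ↦ (Commute.all a b).map _
end
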